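/- arXiv:2201.07668 — 3 statements merged into one kernel-verified Lean document; each statement's English description precedes it below -/
import Mathlib

section
/- Fix t ∈ (0,1), α > 0, and l ∈ ℤ. For positive integers j ≥ 1, k ≥ 1, m, and any real c with 1/2 − j < c < 0, define b(j,k,m) := −(1/(2π)) ∫_ℝ [ Γ(j−1/2+c+iτ) Γ(k−c−iτ) / (Γ(j−1/2) Γ(k)) ]^m / (c+iτ) dτ, where Γ is the Gamma function on ℂ (the value is independent of the choice of c). Then for any sequences of positive integers (N_i), (j_i), (m_i) with N_i → ∞, 2j_i/N_i → t, m_i/N_i → α, and with k_i := j_i + l (assumed ≥ 1), one has b(j_i, k_i, m_i) → (1/2)[ 1 + erf( (2l+1) √(α/(8t)) ) ] as i → ∞. -/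
open MeasureTheory Filter

/-- The error function `erf x = (2/√π) ∫_0^x e^{-s²} ds`. -/
noncomputable def erf (x : ℝ) : ℝ :=
  (2 / Real.sqrt Real.pi) * ∫ s in (0:ℝ)..x, Real.exp (-s ^ 2)

/-- Contour-integral representation (over the vertical line `Re s = c`) of the
normalized Meijer G-function value
`b_{j,k} = -(1/(2π)) ∫_ℝ [Γ(j-1/2+c+iτ)Γ(k-c-iτ)/(Γ(j-1/2)Γ(k))]^m / (c+iτ) dτ`. -/
noncomputable def bInt (j k m : ℕ) (c : ℝ) : ℂ :=
  -(1 / (2 * (Real.pi : ℂ))) * ∫ τ : ℝ,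
    ((Complex.Gamma ((j : ℂ) - 1 / 2 + (c : ℂ) + (τ : ℂ) * Complex.I) *
        Complex.Gamma ((k : ℂ) - (c : ℂ) - (τ : ℂ) * Complex.I)) /
      (Complex.Gamma ((j : ℂ) - 1 / 2) * Complex.Gamma (k : ℂ))) ^ m /
      ((c : ℂ) + (τ : ℂ) * Complex.I)

/-!
With `a = j - 1/2` and `d = k - a`, the integrand of `bInt` is `R(s) ^ m / s` where
`R(s) = Γ(a+s)Γ(b-s)/(Γ(a)Γ(b))`, `b = a + d`. Euler's product gives
`R(s) = ∏ₙ (1 + s(d-s)/((a+n)(b+n)))⁻¹`, and since `∑ₙ 1/((a+n)(a+n+1)) = 1/a`, the `m`-th power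
tends to the Gaussian `exp(β(s² - ds))` as `m/a → β = 2α/t`. Each use of `Γ(z+1) = zΓ(z)` yields one
factor of decay of `|Γ|` along vertical lines; about `a` of them dominate the integrands uniformly,
once Cauchy's theorem has moved all contours to a common line. On that line, writing
`-1/s = ∫₀^∞ exp(sv) dv` and integrating over the contour first turns the Gaussian limit into `erf`.
-/

section

open Asymptotics Complex
open scoped Topology Real

theorem hasSum_inv_mul_add_one {a : ℝ} (ha : 0 < a) :
    HasSum (fun i : ℕ => ((a + i) * (a + i + 1))⁻¹) a⁻¹ := by
  rw [hasSum_iff_tendsto_nat_of_nonneg fun i => by positivity]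
  have hterm (i : ℕ) : ((a + i) * (a + i + 1))⁻¹ = (a + i)⁻¹ - (a + (i + 1 : ℕ))⁻¹ := by
    push_cast
    field_simp
    ring
  have hinv : Tendsto (fun n : ℕ => (a + n)⁻¹) atTop (𝓝 0) :=
    tendsto_inv_atTop_zero.comp (tendsto_atTop_add_const_left _ _ tendsto_natCast_atTop_atTop)
  simp only [hterm, Finset.sum_range_sub' fun i : ℕ => (a + i)⁻¹]
  simpa using hinv.const_sub a⁻¹

section TailSums

variable {E : Type*} [NormedAddCommGroup E] [NormedSpace ℝ E] {g : ℝ → E} {w : E}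

theorem eventually_forall_norm_comp_add_nat_sub_le
    (hg : Tendsto (fun x : ℝ => (x * (x + 1)) • g x) atTop (𝓝 w)) {ε : ℝ} (hε : 0 < ε) :
    ∀ᶠ a : ℝ in atTop, ∀ i : ℕ,
      ‖g (a + i) - ((a + i) * (a + i + 1))⁻¹ • w‖ ≤ ε * ((a + i) * (a + i + 1))⁻¹ := by
  have hclose : ∀ᶠ x : ℝ in atTop, 0 < x ∧ ‖(x * (x + 1)) • g x - w‖ ≤ ε :=
    (eventually_gt_atTop 0).and <|
      (tendsto_iff_norm_sub_tendsto_zero.1 hg).eventually_le_const hε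
  filter_upwards [eventually_forall_ge_atTop.2 hclose] with a ha i
  obtain ⟨hx, hgx⟩ := ha (a + i) (by simp)
  generalize a + (i : ℝ) = x at hx hgx ⊢
  have hy : 0 < x * (x + 1) := by positivity
  rw [← inv_smul_smul₀ hy.ne' (g x), ← smul_sub, norm_smul, Real.norm_of_nonneg (by positivity),
    mul_comm]
  gcongr

variable [CompleteSpace E]

theorem eventually_summable_comp_add_nat
    (hg : Tendsto (fun x : ℝ => (x * (x + 1)) • g x) atTop (𝓝 w)) :
    ∀ᶠ a : ℝ in atTop, Summable fun i : ℕ => g (a + i) := by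
  filter_upwards [eventually_forall_norm_comp_add_nat_sub_le hg one_pos, eventually_gt_atTop 0]
    with a hclose ha
  have hsum := (hasSum_inv_mul_add_one ha).summable
  simpa using (Summable.of_norm_bounded (hsum.mul_left 1) hclose).add (hsum.smul_const w)

theorem tendsto_smul_tsum_comp_add_nat
    (hg : Tendsto (fun x : ℝ => (x * (x + 1)) • g x) atTop (𝓝 w)) :
    Tendsto (fun a : ℝ => a • ∑' i : ℕ, g (a + i)) atTop (𝓝 w) := by
  refine Metric.nhds_basis_closedBall.tendsto_right_iff.2 fun ε hε => ?_
  filter_upwards [eventually_forall_norm_comp_add_nat_sub_le hg hε,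
    eventually_summable_comp_add_nat hg, eventually_gt_atTop 0] with a hclose hsum ha
  have hmain := (hasSum_inv_mul_add_one ha).smul_const w
  have herr := tsum_of_norm_bounded ((hasSum_inv_mul_add_one ha).mul_left ε) hclose
  rw [hsum.tsum_sub hmain.summable, hmain.tsum_eq] at herr
  rw [mem_closedBall_iff_norm]
  calc ‖a • ∑' i : ℕ, g (a + i) - w‖ = a * ‖∑' i : ℕ, g (a + i) - a⁻¹ • w‖ := by
        rw [← Real.norm_of_nonneg ha.le, ← norm_smul, smul_sub, Real.norm_of_nonneg ha.le,
          smul_inv_smul₀ ha.ne']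
    _ ≤ a * (ε * a⁻¹) := by gcongr
    _ = ε := by field_simp

end TailSums

theorem isEquivalent_log_one_add : (fun z : ℂ => log (1 + z)) ~[𝓝 0] id :=
  log_sub_self_isBigO.trans_isLittleO (isLittleO_pow_id one_lt_two)

theorem tendsto_mul_add_one_smul_log_one_add_div (w : ℂ) (d : ℝ) :
    Tendsto (fun x : ℝ => (x * (x + 1)) • log (1 + w / (x * (x + d)))) atTop (𝓝 w) := by
  have hratio : Tendsto (fun x : ℝ => (x + 1) / (x + d)) atTop (𝓝 1) := by
    have hd := tendsto_atTop_add_const_right atTop d tendsto_id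
    have hcorr : Tendsto (fun x : ℝ => 1 + (1 - d) / (x + d)) atTop (𝓝 1) := by
      simpa using (tendsto_const_nhds.div_atTop hd).const_add (1 : ℝ)
    refine hcorr.congr' ?_
    filter_upwards [hd.eventually_ne_atTop 0] with x hx
    simp only [id] at hx
    field_simp
    ring
  have hsmall : Tendsto (fun x : ℝ => w / (x * (x + d))) atTop (𝓝 0) := by
    have hden := tendsto_id.atTop_mul_atTop₀ (tendsto_atTop_add_const_right atTop d tendsto_id)
    simpa [div_eq_mul_inv] using (tendsto_inv_atTop_zero.comp hden).ofReal.const_mul w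
  refine ((IsEquivalent.refl (u := fun x : ℝ => ((x * (x + 1) : ℝ) : ℂ))).mul
    (isEquivalent_log_one_add.comp_tendsto hsmall)).symm.tendsto_nhds ?_
  have hlim : Tendsto (fun x : ℝ => w * ((x + 1) / (x + d) : ℝ)) atTop (𝓝 w) := by
    simpa using hratio.ofReal.const_mul w
  refine hlim.congr' ?_
  filter_upwards [eventually_ne_atTop 0] with x hx
  have hx' : (x : ℂ) ≠ 0 := ofReal_ne_zero.2 hx
  simp only [Pi.mul_apply, Function.comp_apply, id]
  push_cast
  field_simp

theorem ne_neg_natCast_of_re_pos {z : ℂ} (hz : 0 < z.re) (n : ℕ) : z ≠ -n := by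
  rintro rfl
  simp only [neg_re, natCast_re, Left.neg_pos_iff] at hz
  exact hz.not_ge n.cast_nonneg

theorem one_add_mul_sub_div_mul_add {a b s x : ℂ} (ha : a + x ≠ 0) (hb : b + x ≠ 0) :
    1 + s * (b - a - s) / ((a + x) * (b + x)) =
      (a + s + x) * (b - s + x) / ((a + x) * (b + x)) := by
  field_simp
  ring

theorem GammaSeq_mul_div_GammaSeq_mul_eq_prod {a b s : ℂ} (ha : ∀ n : ℕ, a ≠ -n)
    (hb : ∀ n : ℕ, b ≠ -n) {n : ℕ} (hn : n ≠ 0) :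
    GammaSeq a n * GammaSeq b n / (GammaSeq (a + s) n * GammaSeq (b - s) n) =
      ∏ i ∈ Finset.range (n + 1), (1 + s * (b - a - s) / ((a + i) * (b + i))) := by
  have ha' (i : ℕ) : a + i ≠ 0 := fun h => ha i (eq_neg_of_add_eq_zero_left h)
  have hb' (i : ℕ) : b + i ≠ 0 := fun h => hb i (eq_neg_of_add_eq_zero_left h)
  have hpow (z : ℂ) : (n : ℂ) ^ z ≠ 0 := by simp [cpow_eq_zero_iff, hn]
  have hfact : (n.factorial : ℂ) ≠ 0 := mod_cast n.factorial_ne_zero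
  simp only [one_add_mul_sub_div_mul_add (ha' _) (hb' _), Finset.prod_div_distrib,
    Finset.prod_mul_distrib, GammaSeq, cpow_add _ _ (Nat.cast_ne_zero.2 hn),
    cpow_sub _ _ (Nat.cast_ne_zero.2 hn)]
  have := Finset.prod_ne_zero_iff.2 fun i (_ : i ∈ Finset.range (n + 1)) => ha' i
  have := Finset.prod_ne_zero_iff.2 fun i (_ : i ∈ Finset.range (n + 1)) => hb' i
  have := hpow a
  have := hpow b
  have := hpow s
  field_simp

theorem tendsto_prod_one_add_div_Gamma {a b s : ℂ} (ha : ∀ n : ℕ, a ≠ -n)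
    (hb : ∀ n : ℕ, b ≠ -n) (has : ∀ n : ℕ, a + s ≠ -n) (hbs : ∀ n : ℕ, b - s ≠ -n) :
    Tendsto (fun n : ℕ => ∏ i ∈ Finset.range n, (1 + s * (b - a - s) / ((a + i) * (b + i))))
      atTop (𝓝 (Gamma a * Gamma b / (Gamma (a + s) * Gamma (b - s)))) := by
  refine (tendsto_add_atTop_iff_nat 1).1 ?_
  refine (((GammaSeq_tendsto_Gamma a).mul (GammaSeq_tendsto_Gamma b)).div
    ((GammaSeq_tendsto_Gamma (a + s)).mul (GammaSeq_tendsto_Gamma (b - s)))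
    (mul_ne_zero (Gamma_ne_zero has) (Gamma_ne_zero hbs))).congr' ?_
  filter_upwards [eventually_ne_atTop 0] with n hn
  exact GammaSeq_mul_div_GammaSeq_mul_eq_prod ha hb hn

/-- The normalized product `Γ(a+s)Γ(b-s)/(Γ(a)Γ(b))`, i.e. the Mellin transform `E[X^s]` of the
beta prime distribution with parameters `a`, `b`. Its `m`-th power divided by `s` is the integrand
of `bInt`. -/
noncomputable def gammaRatio (a b : ℝ) (s : ℂ) : ℂ :=
  Gamma (a + s) * Gamma (b - s) / (Gamma a * Gamma b)

theorem gammaRatio_eq_exp_neg_tsum_log {a b : ℝ} {s : ℂ} (ha : 0 < a) (hb : 0 < b)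
    (has : 0 < a + s.re) (hbs : 0 < b - s.re)
    (hsum : Summable fun n : ℕ => log (1 + s * (b - a - s) / ((a + n) * (b + n)))) :
    gammaRatio a b s = exp (-∑' n : ℕ, log (1 + s * (b - a - s) / ((a + n) * (b + n)))) := by
  have ha' := ne_neg_natCast_of_re_pos (z := a) (by simpa)
  have hb' := ne_neg_natCast_of_re_pos (z := b) (by simpa)
  have has' := ne_neg_natCast_of_re_pos (z := a + s) (by simpa)
  have hbs' := ne_neg_natCast_of_re_pos (z := b - s) (by simpa using hbs)
  have hfactor (n : ℕ) : 1 + s * (b - a - s) / ((a + n) * (b + n)) ≠ 0 := by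
    have h1 : (a : ℂ) + n ≠ 0 := fun h => ha' n (eq_neg_of_add_eq_zero_left h)
    have h2 : (b : ℂ) + n ≠ 0 := fun h => hb' n (eq_neg_of_add_eq_zero_left h)
    have h3 : a + s + n ≠ 0 := fun h => has' n (eq_neg_of_add_eq_zero_left h)
    have h4 : b - s + n ≠ 0 := fun h => hbs' n (eq_neg_of_add_eq_zero_left h)
    rw [one_add_mul_sub_div_mul_add h1 h2]
    exact div_ne_zero (mul_ne_zero h3 h4) (mul_ne_zero h1 h2)
  have hprod := tendsto_nhds_unique (hasProd_of_hasSum_log hfactor hsum.hasSum).tendsto_prod_nat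
    (tendsto_prod_one_add_div_Gamma ha' hb' has' hbs')
  rw [exp_neg, hprod, inv_div, gammaRatio]

theorem tendsto_gammaRatio_pow {ι : Type*} {u : Filter ι} {a : ι → ℝ} {m : ι → ℕ} {β : ℝ} (s : ℂ)
    (d : ℝ) (ha : Tendsto a u atTop) (hm : Tendsto (fun i => (m i : ℝ) / a i) u (𝓝 β)) :
    Tendsto (fun i => gammaRatio (a i) (a i + d) s ^ m i) u (𝓝 (exp (β * (s ^ 2 - d * s)))) := by
  let L (x : ℝ) : ℂ := log (1 + s * (d - s) / (x * (x + d)))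
  have hL : Tendsto (fun x : ℝ => (x * (x + 1)) • L x) atTop (𝓝 (s * (d - s))) :=
    tendsto_mul_add_one_smul_log_one_add_div _ d
  have hterm (x : ℝ) (n : ℕ) :
      1 + s * ((x + d : ℝ) - x - s) / ((x + n) * ((x + d : ℝ) + n)) =
        1 + s * (d - s) / ((x + n : ℝ) * ((x + n : ℝ) + d)) := by
    push_cast
    ring_nf
  have hratio : ∀ᶠ x : ℝ in atTop, gammaRatio x (x + d) s = exp (-∑' n : ℕ, L (x + n)) := by
    filter_upwards [eventually_summable_comp_add_nat hL, eventually_gt_atTop 0,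
      eventually_gt_atTop (-d), eventually_gt_atTop (-s.re), eventually_gt_atTop (s.re - d)]
      with x hsum hx hxd hxs hxds
    rw [gammaRatio_eq_exp_neg_tsum_log hx (by linarith) (by linarith) (by linarith)]
    · simp only [hterm, L]
    · simpa only [hterm] using hsum
  have hexp := (hm.ofReal.mul ((tendsto_smul_tsum_comp_add_nat hL).comp ha)).neg.cexp
  rw [show -((β : ℂ) * (s * (d - s))) = β * (s ^ 2 - d * s) by ring] at hexp
  refine hexp.congr' ?_
  filter_upwards [ha.eventually hratio, ha.eventually_ne_atTop 0] with i hi h0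
  have h0' : (a i : ℂ) ≠ 0 := ofReal_ne_zero.2 h0
  rw [hi, ← exp_nat_mul]
  congr 1
  simp only [Function.comp_apply, real_smul]
  push_cast
  field_simp

theorem norm_Gamma_le_Gamma_re {z : ℂ} (hz : 0 < z.re) : ‖Gamma z‖ ≤ Real.Gamma z.re := by
  rw [Gamma_eq_integral hz, Real.Gamma_eq_integral hz, GammaIntegral]
  refine (norm_integral_le_integral_norm _).trans_eq ?_
  refine setIntegral_congr_fun measurableSet_Ioi fun x hx => ?_
  simp only [norm_mul, norm_cpow_eq_rpow_re_of_pos hx, norm_real, Real.norm_eq_abs,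
    abs_of_pos (Real.exp_pos _), sub_re, one_re]

theorem re_sq_mul_one_add_im_div_sq_le_norm_sq {z : ℂ} {B : ℝ} (hz : 0 ≤ z.re) (hB : z.re ≤ B) :
    z.re ^ 2 * (1 + (z.im / B) ^ 2) ≤ ‖z‖ ^ 2 := by
  have hfrac : (z.re / B) ^ 2 ≤ 1 :=
    pow_le_one₀ (div_nonneg hz (hz.trans hB)) (div_le_one_of_le₀ hB (hz.trans hB))
  calc z.re ^ 2 * (1 + (z.im / B) ^ 2) = z.re ^ 2 + (z.re / B) ^ 2 * z.im ^ 2 := by ring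
    _ ≤ z.re ^ 2 + 1 * z.im ^ 2 := by gcongr
    _ = ‖z‖ ^ 2 := by rw [← normSq_eq_norm_sq, normSq_apply]; ring

theorem sq_mul_one_add_im_sq_le_norm_sq {s : ℂ} {δ : ℝ} (hδ0 : 0 ≤ δ) (hδ1 : δ ≤ 1)
    (hδs : δ ≤ |s.re|) : δ ^ 2 * (1 + s.im ^ 2) ≤ ‖s‖ ^ 2 := by
  have hre : δ ^ 2 ≤ s.re ^ 2 := by
    rw [← sq_abs s.re]
    gcongr
  calc δ ^ 2 * (1 + s.im ^ 2) = δ ^ 2 + δ ^ 2 * s.im ^ 2 := by ring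
    _ ≤ s.re ^ 2 + 1 * s.im ^ 2 := by gcongr; exact pow_le_one₀ hδ0 hδ1
    _ = ‖s‖ ^ 2 := by rw [← normSq_eq_norm_sq, normSq_apply]; ring

theorem norm_Gamma_sq_mul_pow_le (n : ℕ) {B : ℝ} {z : ℂ} (hz : 0 < z.re) (hB : z.re + n ≤ B) :
    ‖Gamma z‖ ^ 2 * (1 + (z.im / B) ^ 2) ^ n ≤ Real.Gamma z.re ^ 2 := by
  induction n generalizing z with
  | zero => simpa using pow_le_pow_left₀ (norm_nonneg _) (norm_Gamma_le_Gamma_re hz) 2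
  | succ n ih =>
    have hz0 : z ≠ 0 := fun h => by simp [h] at hz
    push_cast at hB
    have hnorm := re_sq_mul_one_add_im_div_sq_le_norm_sq hz.le (B := B)
      (by linarith [n.cast_nonneg (α := ℝ)])
    have hstep := ih (z := z + 1) (by rw [add_re, one_re]; linarith)
      (by rw [add_re, one_re]; linarith)
    simp only [Gamma_add_one z hz0, add_re, one_re, Real.Gamma_add_one hz.ne', norm_mul, add_im,
      one_im, add_zero] at hstep
    refine le_of_mul_le_mul_left ?_ (pow_pos hz 2)
    calc z.re ^ 2 * (‖Gamma z‖ ^ 2 * (1 + (z.im / B) ^ 2) ^ (n + 1))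
        = z.re ^ 2 * (1 + (z.im / B) ^ 2) * (‖Gamma z‖ ^ 2 * (1 + (z.im / B) ^ 2) ^ n) := by ring
      _ ≤ ‖z‖ ^ 2 * (‖Gamma z‖ ^ 2 * (1 + (z.im / B) ^ 2) ^ n) := by gcongr
      _ = (‖z‖ * ‖Gamma z‖) ^ 2 * (1 + (z.im / B) ^ 2) ^ n := by ring
      _ ≤ (z.re * Real.Gamma z.re) ^ 2 := hstep
      _ = z.re ^ 2 * Real.Gamma z.re ^ 2 := by ring

section GammaRatio

variable {a b : ℝ} {s : ℂ}

theorem norm_gammaRatio_sq_mul_pow_le (n : ℕ) {B : ℝ} (has : 0 < a + s.re) (hbs : 0 < b - s.re)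
    (hB : a + s.re + n ≤ B) :
    ‖gammaRatio a b s‖ ^ 2 * (1 + (s.im / B) ^ 2) ^ n ≤ ‖gammaRatio a b s.re‖ ^ 2 := by
  have hnorm {x : ℝ} (hx : 0 < x) : ‖Gamma (x : ℂ)‖ = Real.Gamma x := by
    rw [Gamma_ofReal, norm_real, Real.norm_of_nonneg (Real.Gamma_pos_of_pos hx).le]
  have hdecay := norm_Gamma_sq_mul_pow_le n (B := B) (z := a + s) (by simpa using has)
    (by simpa using hB)
  have hbound := norm_Gamma_le_Gamma_re (z := b - s) (by simpa using hbs)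
  simp only [add_re, sub_re, add_im, ofReal_re, ofReal_im, zero_add] at hdecay hbound
  rw [← hnorm has, ofReal_add] at hdecay
  rw [← hnorm hbs, ofReal_sub] at hbound
  simp only [gammaRatio, norm_div, norm_mul, div_pow _ (‖_‖ * ‖_‖)]
  rw [div_mul_eq_mul_div]
  gcongr
  calc (‖Gamma (a + s)‖ * ‖Gamma (b - s)‖) ^ 2 * (1 + (s.im / B) ^ 2) ^ n
      = ‖Gamma (a + s)‖ ^ 2 * (1 + (s.im / B) ^ 2) ^ n * ‖Gamma (b - s)‖ ^ 2 := by ring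
    _ ≤ ‖Gamma (a + s.re)‖ ^ 2 * ‖Gamma (b - s.re)‖ ^ 2 := by gcongr
    _ = (‖Gamma (a + s.re)‖ * ‖Gamma (b - s.re)‖) ^ 2 := by ring

theorem differentiableAt_gammaRatio (has : 0 < a + s.re) (hbs : 0 < b - s.re) :
    DifferentiableAt ℂ (gammaRatio a b) s := by
  have hΓa : DifferentiableAt ℂ (fun s : ℂ => Gamma (a + s)) s :=
    (differentiableAt_Gamma (a + s) (ne_neg_natCast_of_re_pos (by simpa using has))).comp s
      (by fun_prop)
  have hΓb : DifferentiableAt ℂ (fun s : ℂ => Gamma (b - s)) s :=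
    (differentiableAt_Gamma (b - s) (ne_neg_natCast_of_re_pos (by simpa using hbs))).comp s
      (by fun_prop)
  exact (hΓa.mul hΓb).div_const _

theorem differentiableAt_gammaRatio_pow_div (m : ℕ) (has : 0 < a + s.re) (hbs : 0 < b - s.re)
    (hs : s ≠ 0) : DifferentiableAt ℂ (fun z => gammaRatio a b z ^ m / z) s :=
  ((differentiableAt_gammaRatio has hbs).pow m).div differentiableAt_id hs

theorem norm_gammaRatio_pow_sq_mul_le {m n : ℕ} {B δ M : ℝ} (has : 0 < a + s.re)
    (hbs : 0 < b - s.re) (hB : a + s.re + n ≤ B) (hδ0 : 0 ≤ δ) (hδ1 : δ ≤ 1)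
    (hδB : δ ^ 2 ≤ n * m / B ^ 2) (hM : ‖gammaRatio a b s.re ^ m‖ ≤ M) :
    ‖gammaRatio a b s ^ m‖ ^ 2 * (δ ^ 2 * (1 + s.im ^ 2)) ≤ M ^ 2 := by
  have hbernoulli : δ ^ 2 * (1 + s.im ^ 2) ≤ ((1 + (s.im / B) ^ 2) ^ n) ^ m := by
    calc δ ^ 2 * (1 + s.im ^ 2) = δ ^ 2 + δ ^ 2 * s.im ^ 2 := by ring
      _ ≤ 1 + n * m / B ^ 2 * s.im ^ 2 := by gcongr; exact pow_le_one₀ hδ0 hδ1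
      _ = 1 + (n * m : ℕ) * (s.im / B) ^ 2 := by push_cast; ring
      _ ≤ (1 + (s.im / B) ^ 2) ^ (n * m) :=
        one_add_mul_le_pow (by linarith [sq_nonneg (s.im / B)]) _
      _ = ((1 + (s.im / B) ^ 2) ^ n) ^ m := pow_mul _ _ _
  calc ‖gammaRatio a b s ^ m‖ ^ 2 * (δ ^ 2 * (1 + s.im ^ 2))
      ≤ ‖gammaRatio a b s ^ m‖ ^ 2 * ((1 + (s.im / B) ^ 2) ^ n) ^ m := by gcongr
    _ = (‖gammaRatio a b s‖ ^ 2 * (1 + (s.im / B) ^ 2) ^ n) ^ m := by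
      rw [norm_pow, pow_right_comm, mul_pow]
    _ ≤ (‖gammaRatio a b s.re‖ ^ 2) ^ m := by
      gcongr
      exact norm_gammaRatio_sq_mul_pow_le n has hbs hB
    _ = ‖gammaRatio a b s.re ^ m‖ ^ 2 := by rw [norm_pow, pow_right_comm]
    _ ≤ M ^ 2 := by gcongr

theorem norm_gammaRatio_pow_div_le {m n : ℕ} {B δ M : ℝ} (has : 0 < a + s.re)
    (hbs : 0 < b - s.re) (hB : a + s.re + n ≤ B) (hδ0 : 0 < δ) (hδ1 : δ ≤ 1) (hδs : δ ≤ |s.re|)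
    (hδB : δ ^ 2 ≤ n * m / B ^ 2) (hM : ‖gammaRatio a b s.re ^ m‖ ≤ M) :
    ‖gammaRatio a b s ^ m / s‖ ≤ M / δ ^ 2 * (1 + s.im ^ 2)⁻¹ := by
  have hs : 0 < ‖s‖ := (hδ0.trans_le hδs).trans_le (abs_re_le_norm s)
  have hpow := norm_gammaRatio_pow_sq_mul_le has hbs hB hδ0.le hδ1 hδB hM
  have hden := sq_mul_one_add_im_sq_le_norm_sq hδ0.le hδ1 hδs
  set D := δ ^ 2 * (1 + s.im ^ 2) with hD
  have hD0 : 0 < D := by positivity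
  have hM0 : 0 ≤ M := (norm_nonneg _).trans hM
  calc ‖gammaRatio a b s ^ m / s‖ ≤ M / D := by
        rw [norm_div, div_le_div_iff₀ hs hD0]
        refine abs_le_of_sq_le_sq' (b := M * ‖s‖) ?_ (by positivity) |>.2
        calc (‖gammaRatio a b s ^ m‖ * D) ^ 2 = ‖gammaRatio a b s ^ m‖ ^ 2 * D * D := by ring
          _ ≤ M ^ 2 * ‖s‖ ^ 2 := by gcongr
          _ = (M * ‖s‖) ^ 2 := by ring
    _ = M / δ ^ 2 * (1 + s.im ^ 2)⁻¹ := by rw [hD, ← div_div, div_eq_mul_inv (M / δ ^ 2)]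

theorem exists_norm_gammaRatio_pow_div_le {p q : ℝ} {m : ℕ} (hm : m ≠ 0) (hap : 0 < a + p)
    (hbq : 0 < b - q) (hpq : p ≤ q) (hq : q < 0) :
    ∃ K : ℝ, ∀ s : ℂ, s.re ∈ Set.Icc p q →
      ‖gammaRatio a b s ^ m / s‖ ≤ K * (1 + s.im ^ 2)⁻¹ := by
  obtain ⟨M, hM⟩ := isCompact_Icc.exists_bound_of_continuousOn (s := Set.Icc p q)
    (f := fun x : ℝ => gammaRatio a b x ^ m) fun x hx =>
      (((differentiableAt_gammaRatio (s := x) (by rw [ofReal_re]; linarith [hx.1])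
        (by rw [ofReal_re]; linarith [hx.2])).continuousAt.comp
          continuous_ofReal.continuousAt).pow m).continuousWithinAt
  set B := a + q + 1
  have hB0 : 0 < B := by linarith
  obtain ⟨δ, hδ0, hδ1, hδq, hδB⟩ : ∃ δ : ℝ, 0 < δ ∧ δ ≤ 1 ∧ δ ≤ -q ∧ δ ≤ 1 / B :=
    ⟨min 1 (min (-q) (1 / B)), by simp [hq, hB0], by simp, by simp, by simp⟩
  have hm1 : (1 : ℝ) ≤ m := mod_cast Nat.one_le_iff_ne_zero.2 hm
  refine ⟨M / δ ^ 2, fun s hs => norm_gammaRatio_pow_div_le (n := 1) (B := B)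
    (by linarith [hs.1]) (by linarith [hs.2]) (by push_cast; linarith [hs.2]) hδ0 hδ1
    (hδq.trans ((neg_le_neg hs.2).trans (neg_le_abs _))) ?_ (hM s.re hs)⟩
  calc δ ^ 2 ≤ (1 / B) ^ 2 := by gcongr
    _ ≤ (1 : ℕ) * m / B ^ 2 := by
      rw [div_pow, one_pow, Nat.cast_one, one_mul]
      gcongr

end GammaRatio

section VerticalLine

variable {E : Type*} [NormedAddCommGroup E] {f : ℂ → E} {g : ℝ → ℝ} {p q : ℝ}

theorem integrable_comp_vertical_line {x : ℝ} (hf : ∀ s : ℂ, s.re = x → ContinuousAt f s)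
    (hfg : ∀ s : ℂ, s.re = x → ‖f s‖ ≤ g s.im) (hg : Integrable g) :
    Integrable fun τ : ℝ => f (x + τ * I) := by
  refine hg.mono' (Continuous.aestronglyMeasurable ?_) (Eventually.of_forall fun τ => ?_)
  · exact continuous_iff_continuousAt.2 fun τ =>
      (hf (x + τ * I) (by simp)).comp (f := fun τ : ℝ => (x + τ * I : ℂ)) (by fun_prop)
  · simpa using hfg (x + τ * I) (by simp)

variable [NormedSpace ℂ E]

theorem tendsto_integral_horizontal_segment {u : Filter ℝ} (hpq : p ≤ q)
    (hfg : ∀ s : ℂ, s.re ∈ Set.Icc p q → ‖f s‖ ≤ g s.im) (hg : Tendsto g u (𝓝 0)) :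
    Tendsto (fun T : ℝ => ∫ x : ℝ in p..q, f (x + T * I)) u (𝓝 0) := by
  refine squeeze_zero_norm (fun T => ?_) (by simpa using hg.mul_const |q - p|)
  refine intervalIntegral.norm_integral_le_of_norm_le_const fun x hx => ?_
  rw [Set.uIoc_of_le hpq] at hx
  simpa using hfg (x + T * I) (by simpa using ⟨hx.1.le, hx.2⟩)

theorem integral_vertical_line_eq (hpq : p ≤ q)
    (hf : ∀ s : ℂ, s.re ∈ Set.Icc p q → DifferentiableAt ℂ f s)
    (hfg : ∀ s : ℂ, s.re ∈ Set.Icc p q → ‖f s‖ ≤ g s.im) (hg : Integrable g)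
    (hg0 : Tendsto g (cocompact ℝ) (𝓝 0)) :
    ∫ τ : ℝ, f (p + τ * I) = ∫ τ : ℝ, f (q + τ * I) := by
  have hrect (T : ℝ) : (∫ x : ℝ in p..q, f (x + (-T : ℝ) * I)) -
      (∫ x : ℝ in p..q, f (x + T * I)) + I • (∫ τ : ℝ in -T..T, f (q + τ * I)) -
      I • (∫ τ : ℝ in -T..T, f (p + τ * I)) = 0 := by
    simpa using integral_boundary_rect_eq_zero_of_differentiableOn f (p + (-T : ℝ) * I)
      (q + T * I) fun s hs => (hf s (by
        simpa [Set.uIcc_of_le hpq] using (mem_reProdIm.1 hs).1)).differentiableWithinAt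
  have hvertical (x : ℝ) (hx : x ∈ Set.Icc p q) :=
    intervalIntegral_tendsto_integral (integrable_comp_vertical_line
      (fun s hs => (hf s (hs ▸ hx)).continuousAt) (fun s hs => hfg s (hs ▸ hx)) hg)
      tendsto_neg_atTop_atBot tendsto_id
  have htop := tendsto_integral_horizontal_segment hpq hfg (hg0.mono_left atTop_le_cocompact)
  have hbot := (tendsto_integral_horizontal_segment hpq hfg
    (hg0.mono_left atBot_le_cocompact)).comp tendsto_neg_atTop_atBot
  have hlim := ((hbot.sub htop).add ((hvertical q ⟨hpq, le_rfl⟩).const_smul I)).sub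
    ((hvertical p ⟨le_rfl, hpq⟩).const_smul I)
  simp only [id, Function.comp_apply, hrect] at hlim
  have hzero := tendsto_nhds_unique hlim tendsto_const_nhds
  rw [sub_zero, zero_add, ← smul_sub] at hzero
  exact (sub_eq_zero.1 ((smul_eq_zero.1 hzero).resolve_left I_ne_zero)).symm

end VerticalLine

theorem tendsto_inv_one_add_sq_cocompact :
    Tendsto (fun x : ℝ => (1 + x ^ 2)⁻¹) (cocompact ℝ) (𝓝 0) := by
  have hsq : Tendsto (fun x : ℝ => x ^ 2) (cocompact ℝ) atTop := by
    refine ((tendsto_pow_atTop two_ne_zero).comp tendsto_norm_cocompact_atTop).congr fun x => ?_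
    simp
  exact tendsto_inv_atTop_zero.comp (tendsto_atTop_add_const_left _ 1 hsq)

theorem integral_gammaRatio_pow_div_eq {a b p q : ℝ} {m : ℕ} (hm : m ≠ 0) (hb : 0 < b)
    (hap : 0 < a + p) (hp : p < 0) (haq : 0 < a + q) (hq : q < 0) :
    ∫ τ : ℝ, gammaRatio a b (p + τ * I) ^ m / (p + τ * I) =
      ∫ τ : ℝ, gammaRatio a b (q + τ * I) ^ m / (q + τ * I) := by
  wlog hpq : p ≤ q generalizing p q
  · exact (this haq hq hap hp (le_of_not_ge hpq)).symm
  obtain ⟨K, hK⟩ := exists_norm_gammaRatio_pow_div_le hm hap (by linarith : 0 < b - q) hpq hq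
  refine integral_vertical_line_eq (f := fun s => gammaRatio a b s ^ m / s)
    (g := fun τ => K * (1 + τ ^ 2)⁻¹) hpq (fun s hs => ?_) hK
    (integrable_inv_one_add_sq.const_mul K)
    (by simpa using tendsto_inv_one_add_sq_cocompact.const_mul K)
  refine differentiableAt_gammaRatio_pow_div m (by linarith [hs.1]) (by linarith [hs.2]) ?_
  rintro rfl
  exact hq.not_ge hs.2

theorem integral_Ioi_exp_neg_sq (x : ℝ) :
    ∫ v in Set.Ioi (-x), Real.exp (-v ^ 2) = √π / 2 * (1 + erf x) := by
  have hint : Integrable fun v : ℝ => Real.exp (-v ^ 2) := by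
    simpa using integrable_exp_neg_mul_sq (b := 1) one_pos
  have hhalf : ∫ v in Set.Ioi (0 : ℝ), Real.exp (-v ^ 2) = √π / 2 := by
    simpa using integral_gaussian_Ioi 1
  have heven : ∫ v in (-x)..0, Real.exp (-v ^ 2) = ∫ v in (0 : ℝ)..x, Real.exp (-v ^ 2) := by
    simpa using (intervalIntegral.integral_comp_neg (a := -x) (b := 0)
      fun v : ℝ => Real.exp (-v ^ 2) :)
  rw [← intervalIntegral.integral_interval_add_Ioi (b := 0) hint.integrableOn hint.integrableOn,
    hhalf, heven, erf]
  field_simp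
  ring

theorem integral_Ioi_exp_neg_mul_sub_sq {r : ℝ} (hr : 0 < r) (x : ℝ) :
    ∫ v in Set.Ioi 0, Real.exp (-(r * v - x) ^ 2) = √π / (2 * r) * (1 + erf x) := by
  have htranslate := (measurePreserving_sub_right volume x).setIntegral_preimage_emb
    (measurableEmbedding_subRight x) (fun v : ℝ => Real.exp (-v ^ 2)) (Set.Ioi (-x))
  rw [Set.preimage_sub_const_Ioi, neg_add_cancel, integral_Ioi_exp_neg_sq] at htranslate
  rw [integral_comp_mul_left_Ioi (fun v => Real.exp (-(v - x) ^ 2)) 0 hr, mul_zero, htranslate,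
    smul_eq_mul]
  field_simp

theorem mul_sq_add_mul_vertical_line (β c τ w : ℂ) :
    β * (c + τ * I) ^ 2 + w * (c + τ * I) =
      -β * τ ^ 2 + I * (2 * β * c + w) * τ + (β * c ^ 2 + w * c) := by
  linear_combination β * τ ^ 2 * I_sq

theorem integral_vertical_line_cexp_mul_sq_add_mul {β : ℝ} (hβ : 0 < β) (c : ℝ) (w : ℂ) :
    ∫ τ : ℝ, exp (β * (c + τ * I) ^ 2 + w * (c + τ * I)) =
      √(π / β) * exp (-(w ^ 2 / (4 * β))) := by
  have hβ0 : (β : ℂ) ≠ 0 := ofReal_ne_zero.2 hβ.ne'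
  simp only [mul_sq_add_mul_vertical_line]
  rw [integral_cexp_quadratic (by simpa using hβ), neg_neg, Real.sqrt_eq_rpow,
    ofReal_cpow (by positivity)]
  push_cast
  congr 2
  field_simp
  rw [I_sq]
  ring

theorem integrable_vertical_line_cexp_mul_sq_add_mul {β : ℝ} (hβ : 0 < β) (c : ℝ) (w : ℂ) :
    Integrable fun τ : ℝ => exp (β * (c + τ * I) ^ 2 + w * (c + τ * I)) := by
  simp only [mul_sq_add_mul_vertical_line]
  exact integrable_cexp_quadratic (by simpa using hβ) _ _

theorem integral_div_vertical_line_eq_neg_integral_Ioi {f : ℝ → ℂ} (hf : Integrable f) {c : ℝ}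
    (hc : c < 0) :
    ∫ τ : ℝ, f τ / (c + τ * I) =
      -∫ v in Set.Ioi (0 : ℝ), ∫ τ : ℝ, f τ * exp ((c + τ * I) * v) := by
  have hint : Integrable (Function.uncurry fun τ v : ℝ => f τ * exp ((c + τ * I) * v))
      (volume.prod (volume.restrict (Set.Ioi 0))) := by
    refine (hf.mul_prod (integrableOn_exp_mul_Ioi hc 0).ofReal).mono ?_
      (Eventually.of_forall fun z => ?_)
    · exact hf.aestronglyMeasurable.comp_fst.mul
        (Continuous.aestronglyMeasurable (by fun_prop))
    · simp [Function.uncurry_def, norm_exp]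
  rw [← integral_integral_swap hint, ← integral_neg]
  refine integral_congr_ae (Eventually.of_forall fun τ => ?_)
  have hexp := integral_exp_mul_complex_Ioi (a := c + τ * I) (by simpa using hc) 0
  simp only [integral_const_mul, hexp]
  simp [div_eq_mul_inv]

theorem integral_vertical_line_gaussian_div_eq_erf {β c : ℝ} (hβ : 0 < β) (hc : c < 0) (d : ℝ) :
    -(1 / (2 * (π : ℂ))) * ∫ τ : ℝ,
        exp (β * ((c + τ * I) ^ 2 - d * (c + τ * I))) / (c + τ * I) =
      ((1 / 2 * (1 + erf (d * √β / 2)) : ℝ) : ℂ) := by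
  have : 0 < √β := Real.sqrt_pos.2 hβ
  have hexp (s w : ℂ) : exp (β * (s ^ 2 - d * s)) * exp (s * w) =
      exp (β * s ^ 2 + (w - β * d) * s) := by
    rw [← exp_add]
    ring_nf
  have hint : Integrable fun τ : ℝ => exp (β * ((c + τ * I) ^ 2 - d * (c + τ * I))) := by
    simpa only [← hexp, mul_zero, exp_zero, mul_one] using
      integrable_vertical_line_cexp_mul_sq_add_mul hβ c (0 - β * d)
  have hsquare (v : ℝ) : ((v - β * d : ℂ) ^ 2 / (4 * β)) =
      ((1 / (2 * √β) * v - d * √β / 2) ^ 2 : ℝ) := by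
    norm_cast
    field_simp
    rw [Real.sq_sqrt hβ.le]
    ring
  have hgauss (v : ℝ) : √(π / β) * exp (-((v - β * d) ^ 2 / (4 * β))) =
      ((√(π / β) * Real.exp (-(1 / (2 * √β) * v - d * √β / 2) ^ 2) : ℝ) : ℂ) := by
    rw [hsquare]
    push_cast
    rfl
  rw [integral_div_vertical_line_eq_neg_integral_Ioi hint hc]
  simp only [hexp, integral_vertical_line_cexp_mul_sq_add_mul hβ, hgauss]
  rw [integral_complex_ofReal, integral_const_mul, integral_Ioi_exp_neg_mul_sub_sq (by positivity),
    Real.sqrt_div' _ hβ.le]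
  norm_cast
  field_simp
  rw [Real.sq_sqrt Real.pi_nonneg]

theorem bInt_eq_integral_gammaRatio (j k m : ℕ) (c : ℝ) :
    bInt j k m c = -(1 / (2 * (π : ℂ))) * ∫ τ : ℝ,
      gammaRatio (j - 1 / 2) k (c + τ * I) ^ m / (c + τ * I) := by
  simp only [bInt, gammaRatio]
  push_cast
  simp only [add_assoc, sub_sub]

theorem bInt_eq_bInt_of_lt_zero {j k m : ℕ} {c c' : ℝ} (hk : k ≠ 0) (hm : m ≠ 0)
    (hjc : 1 / 2 - j < c) (hc : c < 0) (hjc' : 1 / 2 - j < c') (hc' : c' < 0) :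
    bInt j k m c = bInt j k m c' := by
  simp only [bInt_eq_integral_gammaRatio]
  rw [integral_gammaRatio_pow_div_eq hm (by positivity) (by linarith) hc (by linarith) hc']

section Asymptotics

variable {ι : Type*} {u : Filter ι} {a : ι → ℝ} {m : ι → ℕ} {β c : ℝ}

theorem tendsto_div_sub_const {x : ι → ℝ} (ha : Tendsto a u atTop)
    (hx : Tendsto (fun i => x i / a i) u (𝓝 β)) (e : ℝ) :
    Tendsto (fun i => x i / (a i - e)) u (𝓝 β) := by
  have hone : Tendsto (fun i => 1 - e / a i) u (𝓝 1) := by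
    simpa using (ha.const_div_atTop e).const_sub 1
  refine (by simpa using hx.div hone one_ne_zero : Tendsto _ u (𝓝 β)).congr' ?_
  filter_upwards [ha.eventually_ne_atTop 0] with i hi
  simp only [Pi.div_apply]
  field_simp

theorem tendsto_nat_floor_mul_div_two_mul_sq {x : ι → ℝ} (ha : Tendsto a u atTop)
    (hx : Tendsto (fun i => x i / a i) u (𝓝 β)) :
    Tendsto (fun i => ⌊a i⌋₊ * x i / (2 * a i) ^ 2) u (𝓝 (β / 4)) := by
  have hfloor := (tendsto_nat_floor_div_atTop (R := ℝ)).comp ha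
  rw [show β / 4 = 1 * β / 4 by ring]
  refine ((hfloor.mul hx).div_const 4).congr fun i => ?_
  simp only [Function.comp_apply]
  ring

theorem exists_eventually_norm_gammaRatio_pow_div_le (d : ℝ) (hβ : 0 < β) (hc : c < 0)
    (ha : Tendsto a u atTop) (hm : Tendsto (fun i => (m i : ℝ) / a i) u (𝓝 β)) :
    ∃ K : ℝ, ∀ᶠ i in u, ∀ τ : ℝ,
      ‖gammaRatio (a i) (a i + d) (c + τ * I) ^ m i / (c + τ * I)‖ ≤ K * (1 + τ ^ 2)⁻¹ := by
  obtain ⟨δ, hδ0, hδ1, hδc, hδβ⟩ : ∃ δ : ℝ, 0 < δ ∧ δ ≤ 1 ∧ δ ≤ -c ∧ δ ≤ β / 8 :=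
    ⟨min 1 (min (-c) (β / 8)), by simp [hc, hβ], by simp, by simp, by simp⟩
  obtain ⟨M, hM⟩ : ∃ M : ℝ, ∀ᶠ i in u, ‖gammaRatio (a i) (a i + d) c ^ m i‖ ≤ M :=
    ⟨_, (tendsto_gammaRatio_pow c d ha hm).norm.eventually_le_const (lt_add_one _)⟩
  refine ⟨M / δ ^ 2, ?_⟩
  filter_upwards [hM, ha.eventually_gt_atTop 0, ha.eventually_gt_atTop (-c),
    ha.eventually_gt_atTop (c - d),
    (tendsto_nat_floor_mul_div_two_mul_sq ha hm).eventually_const_le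
      (by linarith : β / 8 < β / 4)] with i hMi hi0 hic hid hfloor τ
  have hre : (c + τ * I : ℂ).re = c := by simp
  have him : (c + τ * I : ℂ).im = τ := by simp
  have hδsq : δ ^ 2 ≤ β / 8 := (pow_le_of_le_one hδ0.le hδ1 two_ne_zero).trans hδβ
  -- About `a` uses of `Γ(z+1) = zΓ(z)` per factor keep the decay scale `B/√(nm)` bounded.
  have hbound := norm_gammaRatio_pow_div_le (a := a i) (b := a i + d) (s := c + τ * I) (m := m i)
    (n := ⌊a i⌋₊) (B := 2 * a i) (δ := δ) (M := M)
  simp only [hre, him] at hbound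
  exact hbound (by linarith) (by linarith) (by linarith [Nat.floor_le hi0.le]) hδ0 hδ1
    (hδc.trans (neg_le_abs c)) (hδsq.trans hfloor) hMi

theorem tendsto_integral_gammaRatio_pow_div [u.IsCountablyGenerated] (d : ℝ) (hβ : 0 < β)
    (hc : c < 0) (ha : Tendsto a u atTop) (hm : Tendsto (fun i => (m i : ℝ) / a i) u (𝓝 β)) :
    Tendsto (fun i => ∫ τ : ℝ, gammaRatio (a i) (a i + d) (c + τ * I) ^ m i / (c + τ * I)) u
      (𝓝 (∫ τ : ℝ, exp (β * ((c + τ * I) ^ 2 - d * (c + τ * I))) / (c + τ * I))) := by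
  obtain ⟨K, hK⟩ := exists_eventually_norm_gammaRatio_pow_div_le d hβ hc ha hm
  refine tendsto_integral_filter_of_dominated_convergence (fun τ : ℝ => K * (1 + τ ^ 2)⁻¹) ?_
    (hK.mono fun i hi => Eventually.of_forall hi) (integrable_inv_one_add_sq.const_mul K)
    (Eventually.of_forall fun τ => (tendsto_gammaRatio_pow _ d ha hm).div_const _)
  filter_upwards [ha.eventually_gt_atTop (-c), ha.eventually_gt_atTop (c - d)] with i hic hid
  refine (continuous_iff_continuousAt.2 fun τ => ?_).aestronglyMeasurable
  have hre : (c + τ * I : ℂ).re = c := by simp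
  refine (differentiableAt_gammaRatio_pow_div (m i) (s := c + τ * I) ?_ ?_ ?_).continuousAt.comp
    (f := fun τ : ℝ => (c + τ * I : ℂ)) (by fun_prop)
  · rw [hre]
    linarith
  · rw [hre]
    linarith
  · exact fun h => hc.ne (by simpa using congrArg re h)

theorem tendsto_bInt [u.IsCountablyGenerated] (l : ℤ) {j k : ι → ℕ} {c : ι → ℝ} (hβ : 0 < β)
    (hk : ∀ i, (k i : ℤ) = j i + l) (hc : ∀ i, 1 / 2 - (j i : ℝ) < c i ∧ c i < 0)
    (hj : Tendsto j u atTop) (hm : Tendsto (fun i => (m i : ℝ) / j i) u (𝓝 β)) :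
    Tendsto (fun i => bInt (j i) (k i) (m i) (c i)) u
      (𝓝 ((1 / 2 * (1 + erf ((l + 1 / 2) * √β / 2)) : ℝ) : ℂ)) := by
  have hjR : Tendsto (fun i => (j i : ℝ)) u atTop := tendsto_natCast_atTop_atTop.comp hj
  have ha : Tendsto (fun i => (j i : ℝ) - 1 / 2) u atTop :=
    tendsto_atTop_add_const_right _ _ hjR
  rw [← integral_vertical_line_gaussian_div_eq_erf hβ neg_one_lt_zero (l + 1 / 2)]
  refine ((tendsto_integral_gammaRatio_pow_div (l + 1 / 2) hβ neg_one_lt_zero ha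
    (tendsto_div_sub_const hjR hm (1 / 2))).const_mul _).congr' ?_
  filter_upwards [hj.eventually_ge_atTop 2, hj.eventually_ge_atTop (1 - l).toNat,
    hm.eventually_ne hβ.ne'] with i hj2 hjl hm0
  have hj2' : (2 : ℝ) ≤ j i := mod_cast hj2
  have hkR : (k i : ℝ) = j i - 1 / 2 + (l + 1 / 2) := by
    have : (k i : ℝ) = j i + l := mod_cast hk i
    linarith
  rw [bInt_eq_bInt_of_lt_zero (c' := -1) (by grind) (by rintro h; simp [h] at hm0) (hc i).1
    (hc i).2 (by linarith) neg_one_lt_zero, bInt_eq_integral_gammaRatio, hkR]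

end Asymptotics

theorem bInt_tendsto_erf_general {ι : Type*} {u : Filter ι} [u.IsCountablyGenerated] {t α : ℝ}
    (ht : 0 < t) (hα : 0 < α) (l : ℤ) {N : ι → ℝ} {j k m : ι → ℕ} {c : ι → ℝ}
    (hk : ∀ i, (k i : ℤ) = (j i : ℤ) + l) (hc : ∀ i, 1 / 2 - (j i : ℝ) < c i ∧ c i < 0)
    (hN : Tendsto N u atTop) (hj : Tendsto (fun i => 2 * (j i : ℝ) / N i) u (𝓝 t))
    (hm : Tendsto (fun i => (m i : ℝ) / N i) u (𝓝 α)) :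
    Tendsto (fun i => bInt (j i) (k i) (m i) (c i)) u
      (𝓝 ((1 / 2 * (1 + erf ((2 * (l : ℝ) + 1) * √(α / (8 * t)))) : ℝ) : ℂ)) := by
  have hN0 : ∀ᶠ i in u, N i ≠ 0 := hN.eventually_ne_atTop 0
  have hjtop : Tendsto j u atTop := by
    refine tendsto_natCast_atTop_iff.1 <|
      ((hj.pos_mul_atTop ht hN).atTop_div_const two_pos).congr' ?_
    filter_upwards [hN0] with i hi
    field_simp
  have hmj : Tendsto (fun i => (m i : ℝ) / j i) u (𝓝 (2 * α / t)) := by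
    refine ((hm.const_mul 2).div hj ht.ne').congr' ?_
    filter_upwards [hN0] with i hi
    simp only [Pi.div_apply]
    field_simp
  have harg : (2 * (l : ℝ) + 1) * √(α / (8 * t)) = (l + 1 / 2) * √(2 * α / t) / 2 := by
    rw [show 2 * α / t = 4 ^ 2 * (α / (8 * t)) by field_simp; norm_num,
      Real.sqrt_mul (by norm_num), Real.sqrt_sq (by norm_num)]
    ring
  rw [harg]
  exact tendsto_bInt l (by positivity) hk hc hjtop hmj

end

/-- For `j = tN/2`, `m = αN`, `k = j + l` with `l` fixed, the
normalized coefficient `b_{j,k}` converges to `(1/2)[1 + erf((2l+1)√(α/(8t)))]`. -/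
theorem bInt_tendsto_erf (t α : ℝ) (ht : t ∈ Set.Ioo (0 : ℝ) 1) (hα : 0 < α) (l : ℤ)
    (N j k m : ℕ → ℕ) (c : ℕ → ℝ)
    (hjpos : ∀ i, 1 ≤ j i) (hkpos : ∀ i, 1 ≤ k i) (hmpos : ∀ i, 1 ≤ m i)
    (hk : ∀ i, (k i : ℤ) = (j i : ℤ) + l)
    (hc : ∀ i, 1 / 2 - (j i : ℝ) < c i ∧ c i < 0)
    (hN : Tendsto N atTop atTop)
    (hj : Tendsto (fun i => (2 * (j i : ℝ)) / (N i : ℝ)) atTop (nhds t))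
    (hm : Tendsto (fun i => (m i : ℝ) / (N i : ℝ)) atTop (nhds α)) :
    Tendsto (fun i => bInt (j i) (k i) (m i) (c i)) atTop
      (nhds (((1 / 2 * (1 + erf ((2 * (l : ℝ) + 1) * Real.sqrt (α / (8 * t)))) : ℝ) : ℂ))) :=
  bInt_tendsto_erf_general ht.1 hα l hk hc (tendsto_natCast_atTop_atTop.comp hN) hj hm
end

section
/- Fix t ∈ (0,1), α > 0, l ∈ ℤ, and s ∈ ℂ. For any sequences of positive integers (N_i), (j_i), (m_i) with N_i → ∞, 2j_i/N_i → t, m_i/N_i → α, and with k_i := j_i + l (where eventually j_i − 1/2 + Re s > 0 and k_i − Re s > 0), one has [ Γ(j_i − 1/2 + s) Γ(k_i − s) / ( Γ(j_i − 1/2) Γ(k_i) ) ]^{m_i} → exp( (α/t) · s · (2s − 1 − 2l) ) as i → ∞, where Γ is the Gamma function on ℂ. -/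
open Filter

/-!
If `a + b = a' + b'`, the quotient `Q z = Γ(z + a) Γ(z + b) / (Γ(z + a') Γ(z + b'))` tends to `1`
along the natural numbers, because `Γ(n + w + 1) ∼ n! n ^ w`. The functional equation of `Γ` gives
`n ^ 2 (Q n - Q (n + 1)) → a' b' - a b`, so `n (Q n - 1) → a' b' - a b` by the Stolz–Cesàro theorem
for sequences tending to `0`. Hence `Q j ^ m = exp (m log (Q j))` behaves like
`exp ((m / j) (a' b' - a b))`, and `m / j` converges to `2 α / t`.
-/

open Asymptotics Topology
open scoped Nat

section StolzCesaro

variable {E : Type*} [NormedAddCommGroup E] {f : ℕ → E} {g : ℕ → ℝ}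

lemma isLittleO_of_isLittleO_sub_succ (hf : Tendsto f atTop (𝓝 0)) (hg : Tendsto g atTop (𝓝 0))
    (hanti : ∀ᶠ n in atTop, g (n + 1) ≤ g n)
    (hsub : (fun n ↦ f n - f (n + 1)) =o[atTop] fun n ↦ g n - g (n + 1)) : f =o[atTop] g := by
  refine isLittleO_iff.2 fun ε hε ↦ ?_
  filter_upwards [eventually_forall_ge_atTop.2 ((isLittleO_iff.1 hsub hε).and hanti)] with n hn
  have hstep (k : ℕ) (hk : n ≤ k) : dist (f k) (f (k + 1)) ≤ ε * (g k - g (k + 1)) := by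
    obtain ⟨hle, hgk⟩ := hn k hk
    rwa [Real.norm_of_nonneg (sub_nonneg.2 hgk), ← dist_eq_norm] at hle
  have htele (p : ℕ) (hp : n ≤ p) : dist (f n) (f p) ≤ ε * (g n - g p) := by
    refine (dist_le_Ico_sum_of_dist_le hp fun {k} hk _ ↦ hstep k hk).trans_eq ?_
    rw [← Finset.mul_sum, ← neg_sub (g p), ← Finset.sum_Ico_sub g hp, ← Finset.sum_neg_distrib]
    simp only [neg_sub]
  have hlim : dist (f n) 0 ≤ ε * (g n - 0) :=
    le_of_tendsto_of_tendsto (tendsto_const_nhds.dist hf) ((tendsto_const_nhds.sub hg).const_mul ε)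
      (eventually_ge_atTop n |>.mono htele)
  rw [dist_zero_right, sub_zero] at hlim
  exact hlim.trans (by gcongr; exact le_abs_self _)

/-- The **Stolz–Cesàro theorem**, case `0 / 0`. -/
theorem tendsto_inv_smul_of_tendsto_inv_smul_sub_succ [NormedSpace ℝ E] {c : E}
    (hf : Tendsto f atTop (𝓝 0)) (hg : Tendsto g atTop (𝓝 0))
    (hanti : ∀ᶠ n in atTop, g (n + 1) < g n)
    (hsub : Tendsto (fun n ↦ (g n - g (n + 1))⁻¹ • (f n - f (n + 1))) atTop (𝓝 c)) :
    Tendsto (fun n ↦ (g n)⁻¹ • f n) atTop (𝓝 c) := by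
  have hpos : ∀ᶠ n in atTop, 0 < g n := by
    filter_upwards [eventually_forall_ge_atTop.2 hanti] with n hn
    have hstrict : StrictAnti fun k ↦ g (n + k) :=
      strictAnti_nat_of_succ_lt fun k ↦ hn (n + k) (n.le_add_right k)
    have hshift : Tendsto (fun k ↦ g (n + k)) atTop (𝓝 0) :=
      hg.comp (tendsto_add_atTop_nat n |>.congr fun k ↦ add_comm k n)
    exact (hstrict.antitone.le_of_tendsto hshift 1).trans_lt (hstrict one_pos)
  have hsub' : (fun n ↦ (f n - g n • c) - (f (n + 1) - g (n + 1) • c)) =o[atTop]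
      fun n ↦ g n - g (n + 1) := by
    rw [← isLittleOTVS_iff_isLittleO (𝕜 := ℝ), isLittleOTVS_iff_tendsto_inv_smul
      (hanti.mono fun n hn h ↦ absurd h (sub_pos.2 hn).ne')]
    rw [← sub_self c]
    refine (hsub.sub_const c).congr' ?_
    filter_upwards [hanti] with n hn
    rw [sub_sub_sub_comm, ← sub_smul, smul_sub _ _ (_ • c), inv_smul_smul₀ (sub_pos.2 hn).ne']
  have hlim := (isLittleO_of_isLittleO_sub_succ (by simpa using hf.sub (hg.smul_const c)) hg
    (hanti.mono fun n ↦ le_of_lt) hsub').tendsto_inv_smul_nhds_zero.add_const c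
  rw [zero_add] at hlim
  refine hlim.congr' ?_
  filter_upwards [hpos] with n hn
  rw [smul_sub, inv_smul_smul₀ hn.ne', sub_add_cancel]

end StolzCesaro

lemma tendsto_pow_exp_of_tendsto_mul_sub_one {ι : Type*} {u : Filter ι} {x : ι → ℂ} {m : ι → ℕ}
    {c : ℂ} (hx : Tendsto x u (𝓝 1)) (hm : Tendsto (fun i ↦ m i * (x i - 1)) u (𝓝 c)) :
    Tendsto (fun i ↦ x i ^ m i) u (𝓝 (Complex.exp c)) := by
  have hlog : Complex.log ~[𝓝 1] fun z ↦ z - 1 := by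
    simpa [IsEquivalent, Pi.sub_def] using
      (Complex.hasDerivAt_log Complex.one_mem_slitPlane).isLittleO
  have hmlog : Tendsto (fun i ↦ m i * Complex.log (x i)) u (𝓝 c) :=
    (IsEquivalent.refl.mul (hlog.comp_tendsto hx)).symm.tendsto_nhds hm
  refine hmlog.cexp.congr' ?_
  filter_upwards [hx.eventually_ne one_ne_zero] with i hi
  rw [Complex.exp_nat_mul, Complex.exp_log hi]

section Gamma

open Complex (Gamma)

lemma isEquivalent_natCast_add_const (w : ℂ) : (fun n : ℕ ↦ (n : ℂ) + w) ~[atTop] (↑) :=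
  IsEquivalent.refl.add_const_of_norm_tendsto_atTop
    (tendsto_norm_cobounded_atTop.comp tendsto_natCast_atTop_cobounded)

lemma eventually_natCast_add_ne_zero (w : ℂ) : ∀ᶠ n : ℕ in atTop, (n : ℂ) + w ≠ 0 := by
  filter_upwards [tendsto_natCast_atTop_cobounded.eventually_ne_cobounded (-w)] with n hn
  exact mt eq_neg_of_add_eq_zero_left hn

lemma Gamma_mul_prod_range_add {w : ℂ} (hw : ∀ k : ℕ, w ≠ -k) (n : ℕ) :
    Gamma w * ∏ k ∈ Finset.range n, (w + k) = Gamma (w + n) := by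
  induction n with
  | zero => simp
  | succ n ih =>
    have hn : w + n ≠ 0 := mt eq_neg_of_add_eq_zero_left (hw n)
    rw [Finset.prod_range_succ, ← mul_assoc, ih, mul_comm, ← Complex.Gamma_add_one _ hn,
      Nat.cast_succ, add_assoc]

lemma isEquivalent_Gamma_natCast_add_one_of_ne_neg {w : ℂ} (hw : ∀ k : ℕ, w ≠ -k) :
    (fun n : ℕ ↦ Gamma (n + w + 1)) ~[atTop] fun n ↦ n ! * (n : ℂ) ^ w := by
  have hΓ : Gamma w ≠ 0 := Complex.Gamma_ne_zero hw
  have hlim : Tendsto (fun n ↦ Gamma w / Complex.GammaSeq w n) atTop (𝓝 1) := by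
    rw [← div_self hΓ]
    exact tendsto_const_nhds.div (Complex.GammaSeq_tendsto_Gamma w) hΓ
  refine isEquivalent_of_tendsto_one (hlim.congr fun n ↦ ?_)
  rw [Pi.div_apply, Complex.GammaSeq, div_div_eq_mul_div, Gamma_mul_prod_range_add hw,
    Nat.cast_succ]
  ring_nf

theorem isEquivalent_Gamma_natCast_add_one (w : ℂ) :
    (fun n : ℕ ↦ Gamma (n + w + 1)) ~[atTop] fun n ↦ n ! * (n : ℂ) ^ w := by
  obtain ⟨K, hK⟩ := exists_nat_gt (-w.re)
  induction K generalizing w with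
  | zero =>
    refine isEquivalent_Gamma_natCast_add_one_of_ne_neg fun k hk ↦ ?_
    have : (k : ℝ) < 0 := by simpa [hk] using hK
    exact this.not_ge k.cast_nonneg
  | succ K ih =>
    have hK' : -(w + 1).re < K := by
      rw [Complex.add_re, Complex.one_re]
      push_cast at hK
      linarith
    have hquot := (ih (w + 1) hK').div (isEquivalent_natCast_add_const (w + 1))
    refine (hquot.congr_left ?_).congr_right ?_
    · filter_upwards [eventually_natCast_add_ne_zero (w + 1)] with n hn
      rw [Pi.div_apply, Complex.Gamma_add_one _ hn, mul_div_cancel_left₀ _ hn, add_assoc]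
    · filter_upwards [eventually_ne_atTop 0] with n hn
      have hn' : (n : ℂ) ≠ 0 := Nat.cast_ne_zero.2 hn
      rw [Pi.div_apply, Complex.cpow_add _ _ hn', Complex.cpow_one, ← mul_assoc,
        mul_div_cancel_right₀ _ hn']

lemma isEquivalent_Gamma_natCast_add_mul_Gamma_natCast_add (a b : ℂ) :
    (fun n : ℕ ↦ Gamma (n + a) * Gamma (n + b)) ~[atTop]
      fun n ↦ (n ! : ℂ) ^ 2 * (n : ℂ) ^ (a + b - 2) := by
  refine (((isEquivalent_Gamma_natCast_add_one (a - 1)).mul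
    (isEquivalent_Gamma_natCast_add_one (b - 1))).congr_left ?_).congr_right ?_
  · exact .of_forall fun n ↦ by simp [add_assoc]
  · filter_upwards [eventually_ne_atTop 0] with n hn
    rw [Pi.mul_apply, mul_mul_mul_comm, ← Complex.cpow_add _ _ (Nat.cast_ne_zero.2 hn), sq]
    ring_nf

/-- The quotient of products of shifted Gamma values whose `m`-th powers are studied, as a function
of the unshifted argument `z`. It takes the junk value `0` where `z + a'` or `z + b'` is a pole of
`Γ`, which happens for only finitely many natural numbers `z`. -/
noncomputable def gammaQuotient (a b a' b' z : ℂ) : ℂ :=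
  Gamma (z + a) * Gamma (z + b) / (Gamma (z + a') * Gamma (z + b'))

variable {a b a' b' : ℂ}

lemma gammaQuotient_sub_gammaQuotient_add_one (hab : a + b = a' + b') {z : ℂ} (ha : z + a ≠ 0)
    (hb : z + b ≠ 0) (ha' : z + a' ≠ 0) (hb' : z + b' ≠ 0) :
    gammaQuotient a b a' b' z - gammaQuotient a b a' b' (z + 1) =
      gammaQuotient a b a' b' z * ((a' * b' - a * b) / ((z + a') * (z + b'))) := by
  have hΓ {w : ℂ} (hw : z + w ≠ 0) : Gamma (z + 1 + w) = (z + w) * Gamma (z + w) := by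
    rw [add_right_comm, Complex.Gamma_add_one _ hw]
  have hsucc : gammaQuotient a b a' b' (z + 1) =
      gammaQuotient a b a' b' z * ((z + a) * (z + b) / ((z + a') * (z + b'))) := by
    simp only [gammaQuotient, hΓ ha, hΓ hb, hΓ ha', hΓ hb']
    rw [div_mul_div_comm]
    ring
  have hnum : (z + a') * (z + b') - (z + a) * (z + b) = a' * b' - a * b := by
    linear_combination -z * hab
  rw [hsucc, ← hnum, sub_div, div_self (mul_ne_zero ha' hb'), mul_sub, mul_one]

lemma tendsto_gammaQuotient_natCast (hab : a + b = a' + b') :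
    Tendsto (fun n : ℕ ↦ gammaQuotient a b a' b' n) atTop (𝓝 1) := by
  have hquot := (isEquivalent_Gamma_natCast_add_mul_Gamma_natCast_add a b).div
    (isEquivalent_Gamma_natCast_add_mul_Gamma_natCast_add a' b')
  refine (hquot.congr_right ?_).tendsto_const
  filter_upwards [eventually_ne_atTop 0] with n hn
  rw [Pi.div_apply, hab]
  exact div_self (by simp [Nat.factorial_ne_zero, Complex.cpow_eq_zero_iff, hn])

theorem tendsto_natCast_mul_gammaQuotient_sub_one (hab : a + b = a' + b') :
    Tendsto (fun n : ℕ ↦ n * (gammaQuotient a b a' b' n - 1)) atTop (𝓝 (a' * b' - a * b)) := by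
  have hQ := tendsto_gammaQuotient_natCast hab
  have hdiff : Tendsto (fun n : ℕ ↦ ((n : ℝ)⁻¹ - ((n + 1 : ℕ) : ℝ)⁻¹)⁻¹ •
      ((gammaQuotient a b a' b' n - 1) - (gammaQuotient a b a' b' (n + 1 : ℕ) - 1))) atTop
      (𝓝 (a' * b' - a * b)) := by
    have hfrac := (tendsto_natCast_div_add_atTop a').mul
      (tendsto_add_mul_div_add_mul_atTop_nhds 1 b' 1 one_ne_zero)
    have hlim := (hQ.mul_const (a' * b' - a * b)).mul hfrac
    simp only [one_mul, mul_one, div_one] at hlim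
    refine hlim.congr' ?_
    filter_upwards [eventually_ne_atTop 0, eventually_natCast_add_ne_zero a,
      eventually_natCast_add_ne_zero b, eventually_natCast_add_ne_zero a',
      eventually_natCast_add_ne_zero b'] with n hn ha hb ha' hb'
    have hinv : ((n : ℝ)⁻¹ - ((n + 1 : ℕ) : ℝ)⁻¹)⁻¹ = n * (n + 1) := by
      push_cast
      field_simp
      ring
    rw [hinv, sub_sub_sub_cancel_right, Nat.cast_succ,
      gammaQuotient_sub_gammaQuotient_add_one hab ha hb ha' hb', Complex.real_smul]
    push_cast
    simp only [div_eq_mul_inv, mul_inv]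
    ring
  have hanti : ∀ᶠ n : ℕ in atTop, ((n + 1 : ℕ) : ℝ)⁻¹ < (n : ℝ)⁻¹ := by
    filter_upwards [eventually_gt_atTop 0] with n hn
    gcongr
    exact n.lt_succ_self
  simpa only [inv_inv, Complex.real_smul, Complex.ofReal_natCast] using
    tendsto_inv_smul_of_tendsto_inv_smul_sub_succ (by simpa using hQ.sub_const 1)
      tendsto_inv_atTop_nhds_zero_nat hanti hdiff

theorem tendsto_gammaQuotient_natCast_pow {ι : Type*} {u : Filter ι} {j m : ι → ℕ} {c : ℂ}
    (hab : a + b = a' + b') (hj : Tendsto j u atTop)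
    (hm : Tendsto (fun i ↦ (m i : ℂ) / j i) u (𝓝 c)) :
    Tendsto (fun i ↦ gammaQuotient a b a' b' (j i) ^ m i) u
      (𝓝 (Complex.exp (c * (a' * b' - a * b)))) := by
  refine tendsto_pow_exp_of_tendsto_mul_sub_one ((tendsto_gammaQuotient_natCast hab).comp hj) ?_
  refine (hm.mul ((tendsto_natCast_mul_gammaQuotient_sub_one hab).comp hj)).congr' ?_
  filter_upwards [hj.eventually_ne_atTop 0] with i hi
  rw [Function.comp_apply, ← mul_assoc, div_mul_cancel₀ _ (Nat.cast_ne_zero.2 hi)]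

end Gamma

theorem gamma_ratio_pow_tendsto_general {ι : Type*} {u : Filter ι} {t α : ℝ} (ht : 0 < t)
    (a b s : ℂ) {N : ι → ℝ} {j m : ι → ℕ} (hN : Tendsto N u atTop)
    (hj : Tendsto (fun i ↦ 2 * (j i : ℝ) / N i) u (𝓝 t))
    (hm : Tendsto (fun i ↦ m i / N i) u (𝓝 α)) :
    Tendsto (fun i ↦
        (Complex.Gamma (j i - a + s) * Complex.Gamma (j i + b - s) /
          (Complex.Gamma (j i - a) * Complex.Gamma (j i + b))) ^ m i)
      u (𝓝 (Complex.exp ((α / t : ℝ) * s * (2 * s - 2 * a - 2 * b)))) := by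
  have hN0 : ∀ᶠ i in u, N i ≠ 0 := hN.eventually_ne_atTop 0
  have hj_atTop : Tendsto j u atTop := by
    rw [← tendsto_natCast_atTop_iff (R := ℝ)]
    refine ((hj.pos_mul_atTop ht hN).atTop_div_const two_pos).congr' ?_
    filter_upwards [hN0] with i hi
    field_simp
  have hmj : Tendsto (fun i ↦ (m i : ℝ) / j i) u (𝓝 (2 * (α / t))) := by
    refine ((hm.div hj ht.ne').const_mul 2).congr' ?_
    filter_upwards [hN0] with i hi
    simp only [Pi.div_apply]
    field_simp
  have hmj_ofReal : Tendsto (fun i ↦ (m i : ℂ) / j i) u (𝓝 ((2 * (α / t) : ℝ) : ℂ)) :=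
    hmj.ofReal.congr fun i ↦ by push_cast; rfl
  have hsum : -a + s + (b - s) = -a + b := by ring
  convert tendsto_gammaQuotient_natCast_pow hsum hj_atTop hmj_ofReal using 3
  · simp only [gammaQuotient]
    ring_nf
  · push_cast
    ring

/-- For `j = tN/2`, `m = αN`, `k = j + l` with `l ∈ ℤ` and `s ∈ ℂ` fixed,
`[Γ(j-1/2+s)Γ(k-s)/(Γ(j-1/2)Γ(k))]^m → exp((α/t) s (2s - 1 - 2l))`. -/
theorem gamma_ratio_pow_tendsto (t α : ℝ) (ht : t ∈ Set.Ioo (0 : ℝ) 1) (hα : 0 < α)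
    (l : ℤ) (s : ℂ) (N j k m : ℕ → ℕ)
    (hNpos : ∀ i, 1 ≤ N i) (hjpos : ∀ i, 1 ≤ j i) (hkpos : ∀ i, 1 ≤ k i)
    (hmpos : ∀ i, 1 ≤ m i)
    (hk : ∀ i, (k i : ℤ) = (j i : ℤ) + l)
    (hre : ∀ᶠ i in atTop, 0 < (j i : ℝ) - 1 / 2 + s.re ∧ 0 < (k i : ℝ) - s.re)
    (hN : Tendsto N atTop atTop)
    (hj : Tendsto (fun i => (2 * (j i : ℝ)) / (N i : ℝ)) atTop (nhds t))
    (hm : Tendsto (fun i => (m i : ℝ) / (N i : ℝ)) atTop (nhds α)) :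
    Tendsto (fun i =>
        ((Complex.Gamma ((j i : ℂ) - 1 / 2 + s) * Complex.Gamma ((k i : ℂ) - s)) /
          (Complex.Gamma ((j i : ℂ) - 1 / 2) * Complex.Gamma (k i : ℂ))) ^ (m i))
      atTop
      (nhds (Complex.exp (((α / t : ℝ) : ℂ) * s * (2 * s - 1 - 2 * (l : ℂ))))) := by
  have hkj (i : ℕ) : (k i : ℂ) = j i + l := mod_cast hk i
  simpa [hkj] using gamma_ratio_pow_tendsto_general ht.1 (1 / 2) l s
    (tendsto_natCast_atTop_atTop.comp hN) hj hm
end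

section
/- Define c(α) := ∫₀¹ erf(√(α/(8t))) dt, s(α) := ∫₀¹ (α/(8πt)) Σ_{k∈ℤ} ( ∫_{2k−1}^{2k+1} e^{−αx²/(8t)} dx )² dt, and r(α) := 2 − 2 s(α)/c(α) for α > 0. Then lim_{α → 0⁺} r(α) = 2 − √2 and lim_{α → ∞} r(α) = 0. -/
open MeasureTheory Filter

/-- `c(α) = ∫_0^1 erf(√(α/(8t))) dt`. -/
noncomputable def cFun (α : ℝ) : ℝ :=
  ∫ t in (0:ℝ)..1, erf (Real.sqrt (α / (8 * t)))

/-- `s(α) = ∫_0^1 (α/(8πt)) Σ_{k∈ℤ} (∫_{2k-1}^{2k+1} e^{-αx²/(8t)} dx)² dt`. -/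
noncomputable def sFun (α : ℝ) : ℝ :=
  ∫ t in (0:ℝ)..1, (α / (8 * Real.pi * t)) *
    ∑' k : ℤ, (∫ x in (2 * (k : ℝ) - 1)..(2 * (k : ℝ) + 1),
      Real.exp (-(α * x ^ 2) / (8 * t))) ^ 2

/-- `r(α) = 2 - 2 s(α)/c(α)`. -/
noncomputable def rFun (α : ℝ) : ℝ := 2 - 2 * sFun α / cFun α

open Real Set Topology

/-!
Substituting `a = α / (8t)`, both `c(α)` and `s(α)` are averages `∫₀¹ F(α / (8t)) dt`: for `c` the
function `F` is `a ↦ erf √a`, and for `s` it is the probability `P(a)` that two independent centred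
Gaussians of density `√(a/π) e^{-ax²}` fall into the same cell `[2k-1, 2k+1]`. If `F(a) ~ L a^p`
with `p < 1`, then by dominated convergence the average is asymptotic to `L / (1 - p) · (α/8)^p`, so
the ratio of two such averages with the same `p` tends to the ratio of the constants `L`.

As `a → ∞` the Gaussian concentrates in the central cell, so both functions tend to `1` (`p = 0`).
As `a → 0` the density is nearly constant on each cell, so that Cauchy–Schwarz is nearly sharp there
and `∑ (∫_cell f)²` is `2 ∫ f²` up to a bounded error; hence `P(a) ~ √(2/π) √a`, while
`erf √a ~ (2/√π) √a` (`p = 1/2`).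
-/

section General

lemma sq_integral_le_measureReal_univ_mul_integral_sq {Ω : Type*} [MeasurableSpace Ω]
    {μ : Measure Ω} [IsFiniteMeasure μ] {f : Ω → ℝ} (hf : MemLp f 2 μ) :
    (∫ x, f x ∂μ) ^ 2 ≤ μ.real univ * ∫ x, f x ^ 2 ∂μ := by
  obtain rfl | hμ := eq_zero_or_neZero μ
  · simp
  have hpos : 0 < μ.real univ := measureReal_univ_pos
  have jensen : (⨍ x, f x ∂μ) ^ 2 ≤ ⨍ x, f x ^ 2 ∂μ :=
    even_two.convexOn_pow.map_average_le (by fun_prop) isClosed_univ (by simp)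
      (hf.integrable one_le_two) hf.integrable_sq
  rw [average_eq, average_eq, smul_eq_mul, smul_eq_mul, mul_pow] at jensen
  calc (∫ x, f x ∂μ) ^ 2
      = μ.real univ ^ 2 * ((μ.real univ)⁻¹ ^ 2 * (∫ x, f x ∂μ) ^ 2) := by field_simp
    _ ≤ μ.real univ ^ 2 * ((μ.real univ)⁻¹ * ∫ x, f x ^ 2 ∂μ) := by gcongr
    _ = μ.real univ * ∫ x, f x ^ 2 ∂μ := by field_simp

lemma hasSum_intervalIntegral_zsmul {E : Type*} [NormedAddCommGroup E] [NormedSpace ℝ E]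
    {f : ℝ → E} (hf : Integrable f) {p : ℝ} (hp : 0 < p) (a : ℝ) :
    HasSum (fun k : ℤ => ∫ x in (a + k • p)..(a + (k + 1) • p), f x) (∫ x, f x) := by
  have h := hasSum_integral_iUnion (fun k : ℤ => measurableSet_Ioc)
    (pairwise_disjoint_Ioc_add_zsmul a p) (hf.integrableOn (s := ⋃ _, _))
  rw [iUnion_Ioc_add_zsmul hp, Measure.restrict_univ] at h
  refine h.congr_fun fun k => intervalIntegral.integral_of_le ?_
  gcongr
  simp

lemma tsum_sq_le_sq_tsum {ι : Type*} {u : ι → ℝ} (hu : Summable u) (h0 : ∀ i, 0 ≤ u i) :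
    ∑' i, u i ^ 2 ≤ (∑' i, u i) ^ 2 :=
  Real.tsum_le_of_sum_le (fun _ => sq_nonneg _) fun s =>
    (s.sum_sq_le_sq_sum_of_nonneg fun i _ => h0 i).trans <|
      pow_le_pow_left₀ (s.sum_nonneg fun i _ => h0 i) (hu.sum_le_tsum s fun i _ => h0 i) 2

lemma tsum_int_eq_zero_add_two_nsmul_tsum_succ {G : Type*} [AddCommGroup G] [UniformSpace G]
    [IsUniformAddGroup G] [CompleteSpace G] [T2Space G] {u : ℤ → G} (he : u.Even)
    (hu : Summable u) : ∑' k, u k = u 0 + 2 • ∑' n : ℕ, u (n + 1) := by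
  rw [tsum_int_eq_zero_add_two_mul_tsum_pnat he hu, tsum_pnat_eq_tsum_succ (f := fun n : ℕ => u n)]
  simp only [Nat.cast_add, Nat.cast_one]

lemma le_of_even_of_antitoneOn_of_abs_le_abs {α β : Type*} [AddCommGroup α] [LinearOrder α]
    [IsOrderedAddMonoid α] [Preorder β] {f : α → β} (he : f.Even) (ha : AntitoneOn f (Ici 0))
    {x y : α} (h : |x| ≤ |y|) : f y ≤ f x := by
  have habs : ∀ z, f |z| = f z := fun z => by
    obtain hz | hz := abs_choice z <;> simp only [hz, he z]
  rw [← habs x, ← habs y]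
  exact ha (abs_nonneg x) (abs_nonneg y) h

lemma intervalIntegral_neg_self_of_even {E : Type*} [NormedAddCommGroup E] [NormedSpace ℝ E]
    {f : ℝ → E} (he : f.Even) {r : ℝ} (hf : IntervalIntegrable f volume 0 r) :
    ∫ x in -r..r, f x = (2 : ℝ) • ∫ x in (0 : ℝ)..r, f x := by
  have left : ∫ x in -r..0, f x = ∫ x in (0 : ℝ)..r, f x := by
    simpa [he _] using (intervalIntegral.integral_comp_neg f (a := 0) (b := r)).symm
  have hf' : IntervalIntegrable f volume (-r) 0 := by
    simpa [he _] using ((IntervalIntegrable.iff_comp_neg (by simp)).1 hf).symm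
  rw [← intervalIntegral.integral_add_adjacent_intervals hf' hf, left, two_smul]

lemma tendsto_div_nhdsGT_zero {𝕜 : Type*} [Field 𝕜] [LinearOrder 𝕜] [IsStrictOrderedRing 𝕜]
    [TopologicalSpace 𝕜] [ContinuousMul 𝕜] {t : 𝕜} (ht : 0 < t) :
    Tendsto (· / t) (𝓝[>] 0) (𝓝[>] 0) := by
  refine tendsto_nhdsWithin_iff.2 ⟨?_, ?_⟩
  · simpa using ((continuous_id.div_const t).tendsto 0).mono_left nhdsWithin_le_nhds
  · filter_upwards [self_mem_nhdsWithin] with a ha using div_pos ha ht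

end General

section CellIntegral

/-- The integral of `f` over the `k`-th cell `[2k - 1, 2k + 1]` of the partition of the line used in
`sFun`. -/
noncomputable def cellIntegral (f : ℝ → ℝ) (k : ℤ) : ℝ :=
  ∫ x in (2 * (k : ℝ) - 1)..(2 * (k : ℝ) + 1), f x

variable {f : ℝ → ℝ}

lemma cellIntegral_nonneg (hf : ∀ x, 0 ≤ f x) (k : ℤ) : 0 ≤ cellIntegral f k :=
  intervalIntegral.integral_nonneg (by linarith) fun x _ => hf x

lemma even_cellIntegral (hf : f.Even) : (cellIntegral f).Even := fun k => by
  have h := intervalIntegral.integral_comp_neg (a := 2 * (k : ℝ) - 1) (b := 2 * (k : ℝ) + 1) f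
  simp only [hf _] at h
  rw [cellIntegral, cellIntegral, h]
  congr 1 <;> push_cast <;> ring

lemma hasSum_cellIntegral (hf : Integrable f) : HasSum (cellIntegral f) (∫ x, f x) := by
  refine (hasSum_intervalIntegral_zsmul hf two_pos (-1)).congr_fun fun k => ?_
  rw [cellIntegral]
  congr 1 <;> simp only [zsmul_eq_mul] <;> push_cast <;> ring

lemma cellIntegral_le (hf : LocallyIntegrable f) {k : ℤ} {M : ℝ}
    (hM : ∀ x ∈ Icc (2 * (k : ℝ) - 1) (2 * (k : ℝ) + 1), f x ≤ M) : cellIntegral f k ≤ 2 * M := by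
  have h := intervalIntegral.integral_mono_on (by linarith)
    (hf.integrableOn_isCompact isCompact_uIcc).intervalIntegrable intervalIntegrable_const hM
  rw [intervalIntegral.integral_const, smul_eq_mul] at h
  rw [cellIntegral]
  linarith

lemma le_cellIntegral (hf : LocallyIntegrable f) {k : ℤ} {m : ℝ}
    (hm : ∀ x ∈ Icc (2 * (k : ℝ) - 1) (2 * (k : ℝ) + 1), m ≤ f x) : 2 * m ≤ cellIntegral f k := by
  have h := intervalIntegral.integral_mono_on (by linarith) intervalIntegrable_const
    (hf.integrableOn_isCompact isCompact_uIcc).intervalIntegrable hm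
  rw [intervalIntegral.integral_const, smul_eq_mul] at h
  rw [cellIntegral]
  linarith

lemma sq_cellIntegral_le (hf : MemLp f 2) (k : ℤ) :
    cellIntegral f k ^ 2 ≤ 2 * cellIntegral (fun x => f x ^ 2) k := by
  have hk : 2 * (k : ℝ) - 1 ≤ 2 * k + 1 := by linarith
  simp only [cellIntegral, intervalIntegral.integral_of_le hk]
  have h := sq_integral_le_measureReal_univ_mul_integral_sq
    (hf.restrict (Ioc (2 * (k : ℝ) - 1) (2 * k + 1)))
  rw [measureReal_restrict_apply_univ, Real.volume_real_Ioc_of_le hk] at h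
  convert h using 2
  ring

lemma summable_sq_cellIntegral (hf : MemLp f 2) : Summable fun k => cellIntegral f k ^ 2 :=
  .of_nonneg_of_le (fun _ => sq_nonneg _) (sq_cellIntegral_le hf)
    ((hasSum_cellIntegral hf.integrable_sq).summable.mul_left 2)

lemma tsum_sq_cellIntegral_le (hf : MemLp f 2) :
    ∑' k, cellIntegral f k ^ 2 ≤ 2 * ∫ x, f x ^ 2 := by
  have h := (hasSum_cellIntegral hf.integrable_sq).mul_left 2
  rw [← h.tsum_eq]
  exact (summable_sq_cellIntegral hf).tsum_le_tsum (sq_cellIntegral_le hf) h.summable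

lemma tsum_sq_cellIntegral_le_sq_integral (hf : Integrable f) (h0 : ∀ x, 0 ≤ f x) :
    ∑' k, cellIntegral f k ^ 2 ≤ (∫ x, f x) ^ 2 := by
  have h := hasSum_cellIntegral hf
  rw [← h.tsum_eq]
  exact tsum_sq_le_sq_tsum h.summable (cellIntegral_nonneg h0)

variable (he : f.Even) (ha : AntitoneOn f (Ici 0)) (h0 : ∀ x, 0 ≤ f x) (hf : MemLp f 2)
include he ha h0 hf

/-- The common endpoint `2n + 1` carries the minimum of `f` on cell `n` and its maximum on cell
`n + 1`. -/
lemma two_mul_cellIntegral_sq_succ_le (n : ℕ) :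
    2 * cellIntegral (fun x => f x ^ 2) (n + 1) ≤ cellIntegral f n ^ 2 := by
  have hle {x y : ℝ} : |x| ≤ |y| → f y ≤ f x := le_of_even_of_antitoneOn_of_abs_le_abs he ha
  have inner : 2 * f (2 * n + 1) ≤ cellIntegral f n :=
    le_cellIntegral (hf.locallyIntegrable one_le_two) fun x ⟨hx, hx'⟩ => hle <| by
      push_cast at hx hx'
      rw [abs_of_nonneg (by linarith : (0 : ℝ) ≤ 2 * n + 1), abs_le]
      constructor <;> linarith
  have outer : cellIntegral (fun x => f x ^ 2) (n + 1) ≤ 2 * f (2 * n + 1) ^ 2 :=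
    cellIntegral_le hf.integrable_sq.locallyIntegrable fun x ⟨hx, _⟩ => by
      push_cast at hx
      refine pow_le_pow_left₀ (h0 x) (hle ?_) 2
      rw [abs_of_nonneg (by linarith), abs_of_nonneg (by linarith)]
      linarith
  nlinarith [h0 (2 * n + 1)]

lemma le_tsum_sq_cellIntegral :
    2 * (∫ x, f x ^ 2) - 8 * f 0 ^ 2 ≤ ∑' k, cellIntegral f k ^ 2 := by
  have hsq := hasSum_cellIntegral hf.integrable_sq
  have hs := summable_sq_cellIntegral hf
  have he2 : (fun x => f x ^ 2).Even := fun x => by simp only [he x]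
  have hle0 (x : ℝ) : f x ≤ f 0 := le_of_even_of_antitoneOn_of_abs_le_abs he ha (by simp)
  have shift : 2 * ∑' n : ℕ, cellIntegral (fun x => f x ^ 2) (n + 1) ≤
      cellIntegral f 0 ^ 2 + ∑' n : ℕ, cellIntegral f (n + 1) ^ 2 := by
    have hsn : Summable fun n : ℕ => cellIntegral f n ^ 2 := hs.comp_injective Nat.cast_injective
    have hsq1 : Summable fun n : ℕ => cellIntegral (fun x => f x ^ 2) (n + 1) :=
      hsq.summable.comp_injective ((add_left_injective 1).comp Nat.cast_injective)
    rw [← tsum_mul_left]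
    simpa [hsn.tsum_eq_zero_add] using (hsq1.mul_left 2).tsum_le_tsum
      (two_mul_cellIntegral_sq_succ_le he ha h0 hf) hsn
  have central_sq : cellIntegral (fun x => f x ^ 2) 0 ≤ 2 * f 0 ^ 2 :=
    cellIntegral_le hf.integrable_sq.locallyIntegrable fun x _ =>
      pow_le_pow_left₀ (h0 x) (hle0 x) 2
  have sq_central : cellIntegral f 0 ^ 2 ≤ (2 * f 0) ^ 2 :=
    pow_le_pow_left₀ (cellIntegral_nonneg h0 0)
      (cellIntegral_le (hf.locallyIntegrable one_le_two) fun x _ => hle0 x) 2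
  rw [← hsq.tsum_eq,
    tsum_int_eq_zero_add_two_nsmul_tsum_succ (even_cellIntegral he2) hsq.summable,
    tsum_int_eq_zero_add_two_nsmul_tsum_succ (fun k => by rw [even_cellIntegral he k]) hs,
    nsmul_eq_mul, nsmul_eq_mul]
  push_cast
  linarith

end CellIntegral

section Erf

lemma hasDerivAt_erf (x : ℝ) : HasDerivAt erf (2 / √π * exp (-x ^ 2)) x :=
  ((by fun_prop : Continuous fun s : ℝ => exp (-s ^ 2)).integral_hasStrictDerivAt 0 x
    |>.hasDerivAt).const_mul _

lemma erf_zero : erf 0 = 0 := by simp [erf]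

lemma monotone_erf : Monotone erf :=
  monotone_of_hasDerivAt_nonneg hasDerivAt_erf fun _ => by positivity

lemma continuous_erf : Continuous erf :=
  continuous_iff_continuousAt.2 fun x => (hasDerivAt_erf x).continuousAt

lemma tendsto_erf_atTop : Tendsto erf atTop (𝓝 1) := by
  have h := (intervalIntegral_tendsto_integral_Ioi 0
    (integrable_exp_neg_mul_sq one_pos).integrableOn tendsto_id).const_mul (2 / √π)
  rw [integral_gaussian_Ioi] at h
  convert h using 2
  · simp [erf]
  · field_simp

lemma erf_le_one (x : ℝ) : erf x ≤ 1 :=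
  monotone_erf.ge_of_tendsto tendsto_erf_atTop x

lemma erf_nonneg {x : ℝ} (hx : 0 ≤ x) : 0 ≤ erf x :=
  erf_zero ▸ monotone_erf hx

lemma erf_le_mul {x : ℝ} (hx : 0 ≤ x) : erf x ≤ 2 / √π * x := by
  have h := image_sub_le_mul_sub_of_deriv_le (fun y => (hasDerivAt_erf y).differentiableAt)
    (C := 2 / √π) (fun y => ?_) hx
  · simpa [erf_zero] using h
  · rw [(hasDerivAt_erf y).deriv]
    exact mul_le_of_le_one_right (by positivity) (exp_le_one_iff.2 (by nlinarith))

lemma tendsto_erf_div_self : Tendsto (fun x => erf x / x) (𝓝[>] 0) (𝓝 (2 / √π)) := by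
  simpa [erf_zero, div_eq_inv_mul] using (hasDerivAt_erf 0).tendsto_slope_zero_right

lemma tendsto_erf_sqrt_atTop : Tendsto (fun a => erf √a) atTop (𝓝 1) :=
  tendsto_erf_atTop.comp tendsto_sqrt_atTop

lemma tendsto_erf_sqrt_div_sqrt :
    Tendsto (fun a => erf √a / √a) (𝓝[>] 0) (𝓝 (2 / √π)) := by
  refine tendsto_erf_div_self.comp (tendsto_nhdsWithin_iff.2 ⟨?_, ?_⟩)
  · simpa using (continuous_sqrt.tendsto 0).mono_left nhdsWithin_le_nhds
  · filter_upwards [self_mem_nhdsWithin] with a ha using sqrt_pos.2 ha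

end Erf

section CollisionProb

/-- The probability that two independent centred Gaussian variables of density `√(a/π) e^{-ax²}`
fall into the same cell `[2k - 1, 2k + 1]`. The integrand of `sFun α` is its value at
`a = α / (8t)`. -/
noncomputable def collisionProb (a : ℝ) : ℝ :=
  a / π * ∑' k : ℤ, cellIntegral (fun x => exp (-a * x ^ 2)) k ^ 2

lemma even_exp_neg_mul_sq (a : ℝ) : (fun x : ℝ => exp (-a * x ^ 2)).Even := fun x => by
  simp only [neg_sq]

lemma exp_neg_mul_sq_sq (a x : ℝ) : exp (-a * x ^ 2) ^ 2 = exp (-(2 * a) * x ^ 2) := by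
  rw [← exp_nat_mul]
  ring_nf

variable {a : ℝ}

lemma antitoneOn_exp_neg_mul_sq (ha : 0 ≤ a) :
    AntitoneOn (fun x : ℝ => exp (-a * x ^ 2)) (Ici 0) := fun x hx y _ hxy => by
  have := pow_le_pow_left₀ hx hxy 2
  simp only [neg_mul]
  gcongr

lemma memLp_two_exp_neg_mul_sq (ha : 0 < a) : MemLp (fun x : ℝ => exp (-a * x ^ 2)) 2 := by
  rw [memLp_two_iff_integrable_sq (by fun_prop)]
  simpa only [exp_neg_mul_sq_sq] using integrable_exp_neg_mul_sq (by positivity : 0 < 2 * a)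

lemma collisionProb_nonneg (ha : 0 ≤ a) : 0 ≤ collisionProb a :=
  mul_nonneg (by positivity) (tsum_nonneg fun _ => sq_nonneg _)

lemma collisionProb_le_one (ha : 0 < a) : collisionProb a ≤ 1 := by
  have h := tsum_sq_cellIntegral_le_sq_integral (integrable_exp_neg_mul_sq ha)
    fun _ => (exp_pos _).le
  rw [integral_gaussian, sq_sqrt (by positivity)] at h
  calc collisionProb a ≤ a / π * (π / a) := by unfold collisionProb; gcongr
    _ = 1 := by field_simp

lemma div_pi_mul_two_mul_integral_exp_neg_mul_sq_sq (ha : 0 < a) :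
    a / π * (2 * ∫ x, exp (-a * x ^ 2) ^ 2) = √2 / √π * √a := by
  simp only [exp_neg_mul_sq_sq, integral_gaussian, sqrt_div pi_pos.le, sqrt_mul zero_le_two]
  field_simp
  rw [sq_sqrt ha.le, sq_sqrt pi_pos.le, sq_sqrt zero_le_two]
  ring

lemma collisionProb_le_mul_sqrt (ha : 0 < a) : collisionProb a ≤ √2 / √π * √a := by
  rw [← div_pi_mul_two_mul_integral_exp_neg_mul_sq_sq ha, collisionProb]
  gcongr
  exact tsum_sq_cellIntegral_le (memLp_two_exp_neg_mul_sq ha)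

lemma le_collisionProb (ha : 0 < a) : √2 / √π * √a - 8 / π * a ≤ collisionProb a := by
  have h := le_tsum_sq_cellIntegral (even_exp_neg_mul_sq a) (antitoneOn_exp_neg_mul_sq ha.le)
    (fun _ => (exp_pos _).le) (memLp_two_exp_neg_mul_sq ha)
  calc √2 / √π * √a - 8 / π * a
      = a / π * (2 * (∫ x, exp (-a * x ^ 2) ^ 2) - 8 * exp (-a * 0 ^ 2) ^ 2) := by
        rw [mul_sub, div_pi_mul_two_mul_integral_exp_neg_mul_sq_sq ha, zero_pow two_ne_zero,
          mul_zero, exp_zero]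
        ring
    _ ≤ collisionProb a := by unfold collisionProb; gcongr

lemma tendsto_collisionProb_div_sqrt :
    Tendsto (fun a => collisionProb a / √a) (𝓝[>] 0) (𝓝 (√2 / √π)) := by
  have h : Tendsto (fun a => √2 / √π - 8 / π * √a) (𝓝[>] 0) (𝓝 (√2 / √π)) := by
    have : Continuous fun a => √2 / √π - 8 / π * √a := by fun_prop
    simpa using (this.tendsto 0).mono_left nhdsWithin_le_nhds
  refine tendsto_of_tendsto_of_tendsto_of_le_of_le' h tendsto_const_nhds ?_ ?_ <;>
    filter_upwards [self_mem_nhdsWithin] with a (ha : 0 < a)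
  · rw [le_div_iff₀ (sqrt_pos.2 ha), sub_mul, mul_assoc, mul_self_sqrt ha.le]
    exact le_collisionProb ha
  · rw [div_le_iff₀ (sqrt_pos.2 ha)]
    exact collisionProb_le_mul_sqrt ha

lemma measurable_collisionProb : Measurable collisionProb := by
  refine (measurable_id.div_const π).mul (Measurable.tsum fun k => Measurable.pow_const ?_ 2)
  exact (intervalIntegral.continuous_parametric_intervalIntegral_of_continuous'
    (by fun_prop) _ _).measurable

lemma erf_sqrt_eq_sqrt_mul_cellIntegral {a : ℝ} (ha : 0 ≤ a) :
    erf √a = √(a / π) * cellIntegral (fun x => exp (-a * x ^ 2)) 0 := by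
  have rescale := intervalIntegral.mul_integral_comp_mul_left (a := 0) (b := 1)
    (f := fun s => exp (-s ^ 2)) (c := √a)
  have fold := intervalIntegral_neg_self_of_even (even_exp_neg_mul_sq a)
    (Continuous.intervalIntegrable (by fun_prop) 0 1)
  simp only [mul_zero, mul_one, mul_pow, sq_sqrt ha, ← neg_mul] at rescale
  simp only [cellIntegral, Int.cast_zero, mul_zero, zero_sub, zero_add, fold, smul_eq_mul]
  rw [erf, ← rescale, sqrt_div ha]
  ring

lemma sq_erf_sqrt_le_collisionProb {a : ℝ} (ha : 0 < a) : erf √a ^ 2 ≤ collisionProb a := by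
  rw [erf_sqrt_eq_sqrt_mul_cellIntegral ha.le, mul_pow, sq_sqrt (by positivity), collisionProb]
  gcongr
  exact (summable_sq_cellIntegral (memLp_two_exp_neg_mul_sq ha)).le_tsum 0 fun _ _ => sq_nonneg _

lemma tendsto_collisionProb_atTop : Tendsto collisionProb atTop (𝓝 1) := by
  have h : Tendsto (fun a => erf √a ^ 2) atTop (𝓝 1) := by
    simpa using tendsto_erf_sqrt_atTop.pow 2
  refine tendsto_of_tendsto_of_tendsto_of_le_of_le' h tendsto_const_nhds ?_ ?_ <;>
    filter_upwards [eventually_gt_atTop 0] with a ha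
  exacts [sq_erf_sqrt_le_collisionProb ha, collisionProb_le_one ha]

lemma cFun_eq_integral_erf_sqrt (α : ℝ) : cFun α = ∫ t in (0 : ℝ)..1, erf √(α / 8 / t) := by
  simp only [cFun, div_div]

lemma sFun_eq_integral_collisionProb (α : ℝ) :
    sFun α = ∫ t in (0 : ℝ)..1, collisionProb (α / 8 / t) := by
  have prefactor (t : ℝ) : α / (8 * π * t) = α / 8 / t / π := by
    rw [div_div, div_div, mul_right_comm, mul_assoc]
  have exponent (t x : ℝ) : -(α * x ^ 2) / (8 * t) = -(α / 8 / t) * x ^ 2 := by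
    rw [div_div]
    ring
  simp only [sFun, collisionProb, cellIntegral, prefactor, exponent]

end CollisionProb

section Average

variable {l : Filter ℝ} [l.IsCountablyGenerated] (hpos : ∀ᶠ a in l, 0 < a)
  (hdiv : ∀ t, 0 < t → Tendsto (· / t) l l) {p : ℝ} (hp : p < 1)
include hpos hdiv hp

lemma tendsto_integral_comp_div_div_rpow {F : ℝ → ℝ} {C L : ℝ} (hF : Measurable F)
    (hC : ∀ a, 0 < a → |F a| ≤ C * a ^ p) (hL : Tendsto (fun a => F a / a ^ p) l (𝓝 L)) :
    Tendsto (fun β => (∫ t in (0 : ℝ)..1, F (β / t)) / β ^ p) l (𝓝 (L / (1 - p))) := by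
  have limit : ∫ t in (0 : ℝ)..1, L * t ^ (-p) = L / (1 - p) := by
    rw [intervalIntegral.integral_const_mul, integral_rpow (.inl (by linarith)), one_rpow,
      zero_rpow (by linarith), neg_add_eq_sub, sub_zero, mul_one_div]
  have rescale {β t : ℝ} (hβ : 0 < β) (ht : 0 < t) :
      ((β / t) ^ p)⁻¹ * t ^ (-p) = (β ^ p)⁻¹ := by
    have := rpow_pos_of_pos ht p
    rw [div_rpow hβ.le ht.le, rpow_neg ht.le]
    field_simp
  simp_rw [← intervalIntegral.integral_div, ← limit]
  refine intervalIntegral.tendsto_integral_filter_of_dominated_convergence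
    (fun t => C * t ^ (-p)) ?_ ?_
    ((intervalIntegral.intervalIntegrable_rpow' (by linarith)).const_mul C) ?_
  · exact .of_forall fun β =>
      ((hF.comp (measurable_const.div measurable_id)).div_const _).aestronglyMeasurable
  · filter_upwards [hpos] with β hβ
    refine ae_of_all _ fun t ht => ?_
    rw [uIoc_of_le zero_le_one] at ht
    have hβt : 0 < β / t := div_pos hβ ht.1
    rw [div_eq_mul_inv, ← rescale hβ ht.1, ← mul_assoc, ← div_eq_mul_inv, norm_mul, norm_div,
      norm_of_nonneg (rpow_nonneg hβt.le p), norm_of_nonneg (rpow_nonneg ht.1.le _)]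
    have := rpow_nonneg ht.1.le (-p)
    gcongr
    rw [div_le_iff₀ (rpow_pos_of_pos hβt p)]
    exact hC _ hβt
  · refine ae_of_all _ fun t ht => ?_
    rw [uIoc_of_le zero_le_one] at ht
    refine ((hL.comp (hdiv t ht.1)).mul_const _).congr' ?_
    filter_upwards [hpos] with β hβ
    rw [Function.comp_apply, div_eq_mul_inv, mul_assoc, rescale hβ ht.1, ← div_eq_mul_inv]

lemma tendsto_integral_comp_div_div_integral_comp_div {F G : ℝ → ℝ} {C D L M : ℝ}
    (hF : Measurable F) (hG : Measurable G) (hC : ∀ a, 0 < a → |F a| ≤ C * a ^ p)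
    (hD : ∀ a, 0 < a → |G a| ≤ D * a ^ p) (hL : Tendsto (fun a => F a / a ^ p) l (𝓝 L))
    (hM : Tendsto (fun a => G a / a ^ p) l (𝓝 M)) (hM0 : M ≠ 0) :
    Tendsto (fun β => (∫ t in (0 : ℝ)..1, F (β / t)) / ∫ t in (0 : ℝ)..1, G (β / t)) l
      (𝓝 (L / M)) := by
  have hp' : 1 - p ≠ 0 := by linarith
  rw [← div_div_div_cancel_right₀ hp' L M]
  refine ((tendsto_integral_comp_div_div_rpow hpos hdiv hp hF hC hL).div
    (tendsto_integral_comp_div_div_rpow hpos hdiv hp hG hD hM) (div_ne_zero hM0 hp')).congr' ?_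
  filter_upwards [hpos] with β hβ
  exact div_div_div_cancel_right₀ (rpow_pos_of_pos hβ p).ne' _ _

lemma tendsto_rFun {C D L M : ℝ} (hC : ∀ a, 0 < a → collisionProb a ≤ C * a ^ p)
    (hD : ∀ a, 0 < a → erf √a ≤ D * a ^ p) (hL : Tendsto (fun a => collisionProb a / a ^ p) l (𝓝 L))
    (hM : Tendsto (fun a => erf √a / a ^ p) l (𝓝 M)) (hM0 : M ≠ 0) :
    Tendsto rFun l (𝓝 (2 - 2 * (L / M))) := by
  have h := tendsto_integral_comp_div_div_integral_comp_div hpos hdiv hp measurable_collisionProb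
    (continuous_erf.comp continuous_sqrt).measurable
    (fun a ha => (abs_of_nonneg (collisionProb_nonneg ha.le)).trans_le (hC a ha))
    (fun a ha => (abs_of_nonneg (erf_nonneg (sqrt_nonneg a))).trans_le (hD a ha)) hL hM hM0
  refine (((h.comp (hdiv 8 (by norm_num))).const_mul 2).const_sub 2).congr fun α => ?_
  rw [Function.comp_apply, rFun, sFun_eq_integral_collisionProb, cFun_eq_integral_erf_sqrt,
    mul_div_assoc]
  rfl

end Average

/-- `r(α) → 2 - √2` as `α → 0⁺` and `r(α) → 0` as `α → ∞`. -/
theorem rFun_asymp :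
    Tendsto rFun (nhdsWithin 0 (Set.Ioi 0)) (nhds (2 - Real.sqrt 2)) ∧
      Tendsto rFun atTop (nhds 0) := by
  constructor
  · have h := tendsto_rFun (l := 𝓝[>] 0) (p := 1 / 2) self_mem_nhdsWithin
      (fun _ => tendsto_div_nhdsGT_zero) (by norm_num)
      (by simpa only [← sqrt_eq_rpow] using fun _ => collisionProb_le_mul_sqrt)
      (by simpa only [← sqrt_eq_rpow] using fun a _ => erf_le_mul (sqrt_nonneg a))
      (by simpa only [← sqrt_eq_rpow] using tendsto_collisionProb_div_sqrt)
      (by simpa only [← sqrt_eq_rpow] using tendsto_erf_sqrt_div_sqrt) (by positivity)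
    rwa [div_div_div_cancel_right₀ (by positivity), mul_div_cancel₀ _ two_ne_zero] at h
  · have h := tendsto_rFun (p := 0) (C := 1) (D := 1) (eventually_gt_atTop 0)
      (fun _ ht => tendsto_id.atTop_div_const ht) zero_lt_one
      (by simpa using fun _ => collisionProb_le_one)
      (by simpa using fun a _ => erf_le_one √a)
      (by simpa using tendsto_collisionProb_atTop)
      (by simpa using tendsto_erf_sqrt_atTop) one_ne_zero
    simpa using h
end
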